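/- arXiv:1801.08733 — 3 statements merged into one kernel-verified Lean document; each statement's English description precedes it below -/
import Mathlib

section
/- For every ε > 0 there exists N such that for all n ≥ N the following holds: if A ⊆ {1,2,…,n} is a set such that no product of 6 pairwise distinct elements of A is a perfect square, then |A| ≤ π(n) + π(n/2) + n^{2/3}(log n)^{2^{1/3} − 1/3 + ε}. -/
/-- No product of 6 pairwise distinct elements of `A` is a perfect square. -/
def NoSixSquareProduct (A : Finset ℕ) : Prop :=
  ¬ ∃ a₁ a₂ a₃ a₄ a₅ a₆ : ℕ, a₁ ∈ A ∧ a₂ ∈ A ∧ a₃ ∈ A ∧ a₄ ∈ A ∧ a₅ ∈ A ∧ a₆ ∈ A ∧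
    ([a₁, a₂, a₃, a₄, a₅, a₆] : List ℕ).Nodup ∧
    ∃ m : ℕ, 0 < m ∧ a₁ * a₂ * a₃ * a₄ * a₅ * a₆ = m ^ 2

/-! Factor each `a ∈ A` as `a = u * v`. When the product of six distinct elements is never a
square, the bipartite graph with edges `(u, v)` has no 6-cycle, because the six labels `u * v` along
a 6-cycle multiply to the square of the product of its vertices.

With `y = n ^ (1 / 3)`, the factorization can be chosen so that either `u ≤ y` and `v` is prime or
at most `y ^ 2`, or `y < u ≤ y ^ 2`. In the first case all but `O(y ^ 2)` edges survive when every
`v` keeps at most two of its neighbours, and a prime `v > n / 2` has only the neighbour `1`, whence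
the main term `π(n) + π(n / 2)`. In the second case, a graph without 6-cycles with parts of sizes
`U` and `V` has `O(U + V + (U * V) ^ (2 / 3))` edges; summing over dyadic ranges of `u` with
Hölder's inequality gives `O(y ^ 2 + y ^ 2 * (log n) ^ (1 / 3) * (∑ 1 / u) ^ (2 / 3))`. The sum over
the occurring `u` is `O(√(log n))`, since each `u` can be chosen free of prime factors up to
`z = exp (√(log n))` or at most `y * z`. This leaves `O(n ^ (2 / 3) * (log n) ^ (2 / 3))`, and
`2 / 3 < 2 ^ (1 / 3) - 1 / 3`. -/

open Finset

section CyclesInBipartiteGraphs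

variable {α β : Type*} {E F : Finset (α × β)} {U : Finset α} {V : Finset β}

/-- The bipartite graph with edge set `E` between `α` and `β` contains no 4-cycle. -/
def IsC4Free (E : Finset (α × β)) : Prop :=
  ∀ ⦃x₁ x₂ : α⦄ ⦃y₁ y₂ : β⦄, x₁ ≠ x₂ → y₁ ≠ y₂ →
    (x₁, y₁) ∈ E → (x₂, y₁) ∈ E → (x₂, y₂) ∈ E → (x₁, y₂) ∉ E

/-- The bipartite graph with edge set `E` between `α` and `β` contains no 6-cycle. -/
def IsC6Free (E : Finset (α × β)) : Prop :=
  ∀ ⦃x₁ x₂ x₃ : α⦄ ⦃y₁ y₂ y₃ : β⦄, x₁ ≠ x₂ → x₁ ≠ x₃ → x₂ ≠ x₃ → y₁ ≠ y₂ → y₁ ≠ y₃ → y₂ ≠ y₃ →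
    (x₁, y₁) ∈ E → (x₂, y₁) ∈ E → (x₂, y₂) ∈ E → (x₃, y₂) ∈ E → (x₃, y₃) ∈ E → (x₁, y₃) ∉ E

theorem IsC6Free.mono (hF : IsC6Free F) (hEF : E ⊆ F) : IsC6Free E :=
  fun _ _ _ _ _ _ hx₁₂ hx₁₃ hx₂₃ hy₁₂ hy₁₃ hy₂₃ h₁ h₂ h₃ h₄ h₅ h₆ ↦
    hF hx₁₂ hx₁₃ hx₂₃ hy₁₂ hy₁₃ hy₂₃ (hEF h₁) (hEF h₂) (hEF h₃) (hEF h₄) (hEF h₅) (hEF h₆)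

/-- `d` is the edge disjoint from `e` in some 4-cycle of `E` through `e`. -/
def IsOppositeEdge (E : Finset (α × β)) (e d : α × β) : Prop :=
  d.1 ≠ e.1 ∧ d.2 ≠ e.2 ∧ (d.1, e.2) ∈ E ∧ (e.1, d.2) ∈ E ∧ d ∈ E

theorem IsC6Free.fst_eq_or_snd_eq_of_isOppositeEdge (hE : IsC6Free E) {e d d' : α × β}
    (hd : IsOppositeEdge E e d) (hd' : IsOppositeEdge E e d') : d.1 = d'.1 ∨ d.2 = d'.2 := by
  obtain ⟨h₁, h₂, hde, hed, h⟩ := hd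
  obtain ⟨h₁', h₂', hde', hed', h'⟩ := hd'
  by_contra! ⟨hfst, hsnd⟩
  exact hE h₁.symm h₁'.symm hfst h₂ hsnd h₂'.symm hed h hde hde' h' hed'

/- Opposite edges of `e` pairwise share an endpoint, so they all share the same one. -/
theorem IsC6Free.forall_fst_eq_or_forall_snd_eq (hE : IsC6Free E) {e d : α × β}
    (hd : IsOppositeEdge E e d) :
    (∀ d', IsOppositeEdge E e d' → d'.1 = d.1) ∨ ∀ d', IsOppositeEdge E e d' → d'.2 = d.2 := by
  by_contra! ⟨⟨d₁, hd₁, hne₁⟩, ⟨d₂, hd₂, hne₂⟩⟩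
  have h₁ := hE.fst_eq_or_snd_eq_of_isOppositeEdge hd₁ hd
  have h₂ := hE.fst_eq_or_snd_eq_of_isOppositeEdge hd₂ hd
  have h₁₂ := hE.fst_eq_or_snd_eq_of_isOppositeEdge hd₁ hd₂
  grind

theorem isC4Free_filter_isOppositeEdge {r : α × β → α × β → Prop} (hr : ∀ e d, r e d → ¬ r d e)
    [DecidablePred fun e ↦ ∀ d, IsOppositeEdge E e d → r e d] :
    IsC4Free {e ∈ E | ∀ d, IsOppositeEdge E e d → r e d} := by
  intro x₁ x₂ y₁ y₂ hx hy h₁₁ h₂₁ h₂₂ h₁₂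
  rw [mem_filter] at h₁₁ h₂₁ h₂₂ h₁₂
  exact hr _ _ (h₁₁.2 (x₂, y₂) ⟨hx.symm, hy.symm, h₂₁.1, h₁₂.1, h₂₂.1⟩)
    (h₂₂.2 (x₁, y₁) ⟨hx, hy, h₁₂.1, h₂₁.1, h₁₁.1⟩)

/- The opposite edges of `e` all lie on the same side of `e` in one of the two coordinates; on each
of the four classes of edges so defined, being opposite is an asymmetric relation. -/
theorem IsC6Free.exists_isC4Free_subset (hE : IsC6Free E) :
    ∃ F ⊆ E, IsC4Free F ∧ #E ≤ 4 * #F := by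
  classical
  obtain ⟨_, -⟩ := exists_wellFoundedLT α
  obtain ⟨_, -⟩ := exists_wellFoundedLT β
  let r : Fin 4 → α × β → α × β → Prop :=
    ![fun e d ↦ e.1 < d.1, fun e d ↦ d.1 < e.1, fun e d ↦ e.2 < d.2, fun e d ↦ d.2 < e.2]
  have hr (i : Fin 4) (e d : α × β) : r i e d → ¬ r i d e := by
    fin_cases i <;> exact fun h ↦ h.asymm
  let F (i : Fin 4) : Finset (α × β) := {e ∈ E | ∀ d, IsOppositeEdge E e d → r i e d}
  have hcover : E ⊆ univ.biUnion F := fun e he ↦ by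
    suffices ∃ i, ∀ d, IsOppositeEdge E e d → r i e d by simpa [F, he] using this
    by_cases hopp : ∃ d, IsOppositeEdge E e d
    · obtain ⟨d, hd⟩ := hopp
      obtain h | h := hE.forall_fst_eq_or_forall_snd_eq hd
      · obtain hlt | hlt := hd.1.lt_or_gt
        exacts [⟨1, fun d' hd' ↦ (h d' hd').trans_lt hlt⟩,
          ⟨0, fun d' hd' ↦ hlt.trans_eq (h d' hd').symm⟩]
      · obtain hlt | hlt := hd.2.1.lt_or_gt
        exacts [⟨3, fun d' hd' ↦ (h d' hd').trans_lt hlt⟩,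
          ⟨2, fun d' hd' ↦ hlt.trans_eq (h d' hd').symm⟩]
    · exact ⟨0, fun d hd ↦ (hopp ⟨d, hd⟩).elim⟩
  obtain ⟨i, -, hi⟩ : ∃ i ∈ univ, #E ≤ 4 * #(F i) := by
    refine exists_le_of_sum_le univ_nonempty ?_
    rw [sum_const, card_univ, Fintype.card_fin, smul_eq_mul, ← mul_sum]
    exact Nat.mul_le_mul_left 4 ((card_le_card hcover).trans card_biUnion_le)
  exact ⟨F i, filter_subset _ _, isC4Free_filter_isOppositeEdge (hr i), hi⟩

theorem IsC6Free.middle_edge_unique (h₆ : IsC6Free E) (h₄ : IsC4Free E) {a x x' : α} {b y y' : β}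
    (hxa : x ≠ a) (hxa' : x' ≠ a) (hyb : y ≠ b) (hyb' : y' ≠ b)
    (hay : (a, y) ∈ E) (hxy : (x, y) ∈ E) (hxb : (x, b) ∈ E)
    (hay' : (a, y') ∈ E) (hxy' : (x', y') ∈ E) (hxb' : (x', b) ∈ E) : x = x' ∧ y = y' := by
  by_contra! hne
  obtain rfl | hx := eq_or_ne x x'
  · exact h₄ hxa.symm (hne rfl) hay hxy hxy' hay'
  obtain rfl | hy := eq_or_ne y y'
  · exact h₄ hx hyb hxy hxy' hxb' hxb
  exact h₆ hxa.symm hxa'.symm hx hyb hy hyb'.symm hay hxy hxb hxb' hxy' hay'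

theorem card_le_min_two_add_card_offDiag_filter (R : α → α → Prop) [DecidableRel R]
    (S : Finset α)
    (hR : ∀ a ∈ S, ∀ b ∈ S, ∀ c ∈ S, a ≠ b → a ≠ c → b ≠ c → R a b ∨ R a c ∨ R b c) :
    #S ≤ min 2 #S + #{p ∈ S.offDiag | R p.1 p.2} := by
  classical
  induction S using Finset.strongInduction with
  | H S ih =>
    obtain hS | hS := le_or_gt #S 2
    · simp [hS]
    obtain ⟨x, hx, y, hy, hxy, hRxy⟩ : ∃ x ∈ S, ∃ y ∈ S, x ≠ y ∧ R x y := by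
      obtain ⟨a, ha, b, hb, c, hc, hab, hac, hbc⟩ := two_lt_card.1 hS
      obtain h | h | h := hR a ha b hb c hc hab hac hbc
      exacts [⟨a, ha, b, hb, hab, h⟩, ⟨a, ha, c, hc, hac, h⟩, ⟨b, hb, c, hc, hbc, h⟩]
    have hlt : #{p ∈ (S.erase x).offDiag | R p.1 p.2} < #{p ∈ S.offDiag | R p.1 p.2} := by
      refine card_lt_card (ssubset_iff_of_subset ?_ |>.2 ⟨(x, y), ?_, ?_⟩)
      · exact filter_subset_filter _ (offDiag_mono (erase_subset x S))
      · simp [hx, hy, hxy, hRxy]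
      · simp
    have hle := ih (S.erase x) (erase_ssubset hx) fun a ha b hb c hc ↦
      hR a (mem_of_mem_erase ha) b (mem_of_mem_erase hb) c (mem_of_mem_erase hc)
    rw [card_erase_of_mem hx] at hle
    omega

theorem card_eq_sum_card_filter_mk_mem [DecidableEq α] [DecidableEq β]
    (hUV : E ⊆ U ×ˢ V) :
    #E = ∑ y ∈ V, #{x ∈ U | (x, y) ∈ E} := by
  simp_rw [card_filter]
  rw [← sum_product_right (f := fun p ↦ if p ∈ E then 1 else 0), ← card_filter,
    filter_mem_eq_inter, inter_eq_right.2 hUV]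

theorem IsC6Free.exists_card_common_neighbors_le_two [DecidableEq α] [DecidableEq β]
    (hE : IsC6Free E) {y : β} {a b c : α}
    (hab : a ≠ b) (hac : a ≠ c) (hbc : b ≠ c) (hby : (b, y) ∈ E)
    (hcy : (c, y) ∈ E) (V : Finset β) :
    #{v ∈ V | (a, v) ∈ E ∧ (b, v) ∈ E} ≤ 2 ∨ #{v ∈ V | (a, v) ∈ E ∧ (c, v) ∈ E} ≤ 2 ∨
      #{v ∈ V | (b, v) ∈ E ∧ (c, v) ∈ E} ≤ 2 := by
  by_contra! ⟨h_ab, h_ac, -⟩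
  obtain ⟨v, hv, hvy⟩ : ∃ v ∈ {v ∈ V | (a, v) ∈ E ∧ (b, v) ∈ E}, v ∉ ({y} : Finset β) :=
    exists_mem_notMem_of_card_lt_card (by rw [card_singleton]; omega)
  obtain ⟨w, hw, hwyv⟩ : ∃ w ∈ {w ∈ V | (a, w) ∈ E ∧ (c, w) ∈ E}, w ∉ ({y, v} : Finset β) :=
    exists_mem_notMem_of_card_lt_card (card_le_two.trans_lt h_ac)
  simp only [mem_filter, mem_insert, mem_singleton, not_or] at hv hw hvy hwyv
  exact hE hbc.symm hac.symm hab.symm (Ne.symm hvy) (Ne.symm hwyv.1) (Ne.symm hwyv.2)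
    hcy hby hv.2.2 hv.2.1 hw.2.1 hw.2.2

/- Among any three neighbours of a vertex, two have at most two common neighbours, so `y ∈ V` has
at least `deg y - 2` pairs of such neighbours; each pair arises from at most two `y`. -/
theorem IsC6Free.card_le_sum_min_two_add [DecidableEq α] [DecidableEq β]
    (hE : IsC6Free E) (hUV : E ⊆ U ×ˢ V) :
    #E ≤ ∑ y ∈ V, min 2 #{x ∈ U | (x, y) ∈ E} + 2 * #U ^ 2 := by
  set light : Finset (α × α) := {p ∈ U.offDiag | #{v ∈ V | (p.1, v) ∈ E ∧ (p.2, v) ∈ E} ≤ 2}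
    with light_def
  have hdeg (y : β) : #{x ∈ U | (x, y) ∈ E} ≤
      min 2 #{x ∈ U | (x, y) ∈ E} + #{p ∈ light | (p.1, y) ∈ E ∧ (p.2, y) ∈ E} := by
    refine (card_le_min_two_add_card_offDiag_filter
      (fun a b ↦ #{v ∈ V | (a, v) ∈ E ∧ (b, v) ∈ E} ≤ 2) _ ?_).trans ?_
    · simp only [mem_filter]
      exact fun a _ b hb c hc hab hac hbc ↦
        hE.exists_card_common_neighbors_le_two hab hac hbc hb.2 hc.2 V
    · refine Nat.add_le_add_left (card_le_card fun p hp ↦ ?_) _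
      simp only [light_def, mem_filter, mem_offDiag] at hp ⊢
      exact ⟨⟨⟨hp.1.1.1, hp.1.2.1.1, hp.1.2.2⟩, hp.2⟩, hp.1.1.2, hp.1.2.1.2⟩
  have hlight : ∑ y ∈ V, #{p ∈ light | (p.1, y) ∈ E ∧ (p.2, y) ∈ E} ≤ 2 * #U ^ 2 := calc
    ∑ y ∈ V, #{p ∈ light | (p.1, y) ∈ E ∧ (p.2, y) ∈ E}
      = ∑ p ∈ light, #{y ∈ V | (p.1, y) ∈ E ∧ (p.2, y) ∈ E} :=
        sum_card_bipartiteAbove_eq_sum_card_bipartiteBelow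
          fun y (p : α × α) ↦ (p.1, y) ∈ E ∧ (p.2, y) ∈ E
    _ ≤ #light * 2 := sum_le_card_nsmul _ _ _ fun p hp ↦ (mem_filter.1 hp).2
    _ ≤ #U.offDiag * 2 := Nat.mul_le_mul_right _ (card_filter_le _ _)
    _ ≤ 2 * #U ^ 2 := by rw [offDiag_card, mul_comm, sq]; omega
  calc #E = ∑ y ∈ V, #{x ∈ U | (x, y) ∈ E} := card_eq_sum_card_filter_mk_mem hUV
    _ ≤ ∑ y ∈ V, (min 2 #{x ∈ U | (x, y) ∈ E} + #{p ∈ light | (p.1, y) ∈ E ∧ (p.2, y) ∈ E}) :=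
      sum_le_sum fun y _ ↦ hdeg y
    _ ≤ ∑ y ∈ V, min 2 #{x ∈ U | (x, y) ∈ E} + 2 * #U ^ 2 := by
      rw [sum_add_distrib]
      exact Nat.add_le_add_left hlight _

/- The left-hand side counts the paths with three edges by their middle edge; such a path is
determined by its endpoints. -/
theorem IsC6Free.sum_card_mul_card_le [DecidableEq α] [DecidableEq β]
    (h₆ : IsC6Free E) (h₄ : IsC4Free E) (hUV : E ⊆ U ×ˢ V) :
    ∑ e ∈ E, #({f ∈ E | f.2 = e.2}.erase e) * #({g ∈ E | g.1 = e.1}.erase e) ≤ #U * #V := by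
  simp_rw [← card_product]
  rw [← card_sigma]
  refine card_le_card_of_injOn (fun p ↦ (p.2.1.1, p.2.2.2)) ?_ ?_
  · rintro ⟨e, f, g⟩ h
    simp only [coe_sigma, Set.mem_sigma_iff, mem_coe, mem_product, mem_erase, mem_filter] at h
    exact mem_product.2 ⟨(mem_product.1 (hUV h.2.1.2.1)).1, (mem_product.1 (hUV h.2.2.2.1)).2⟩
  · rintro ⟨⟨x, y⟩, ⟨a, _⟩, ⟨_, b⟩⟩ h ⟨⟨x', y'⟩, ⟨a', _⟩, ⟨_, b'⟩⟩ h' hab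
    simp only [Prod.mk.injEq] at hab
    obtain ⟨rfl, rfl⟩ := hab
    simp only [coe_sigma, Set.mem_sigma_iff, mem_coe, mem_product, mem_erase, mem_filter] at h h'
    obtain ⟨hxy, ⟨hfe, hf, rfl⟩, hge, hg, rfl⟩ := h
    obtain ⟨hxy', ⟨hfe', hf', rfl⟩, hge', hg', rfl⟩ := h'
    obtain ⟨rfl, rfl⟩ := h₆.middle_edge_unique h₄ (a := a) (b := b) (by grind) (by grind)
      (by grind) (by grind) hf hxy hg hf' hxy' hg'
    rfl

theorem mul_card_filter_card_fiber_lt_le {γ δ : Type*} [DecidableEq δ] (s : Finset γ)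
    (t : Finset δ) {f : γ → δ} (hf : ∀ c ∈ s, f c ∈ t) (k : ℕ) :
    k * #{c ∈ s | k * #t * #{c' ∈ s | f c' = f c} < #s} ≤ #s := by
  obtain rfl | ⟨c, hc⟩ := s.eq_empty_or_nonempty
  · simp
  set B := {c ∈ s | k * #t * #{c' ∈ s | f c' = f c} < #s}
  have hBf (c : γ) (hc : c ∈ B) : f c ∈ t := hf c (mem_filter.1 hc).1
  have hfiber (v : δ) (_ : v ∈ t) : k * #t * #{c ∈ B | f c = v} ≤ #s := by
    obtain h | ⟨c, hc⟩ := eq_empty_or_nonempty {c ∈ B | f c = v}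
    · simp [h]
    · obtain ⟨hcB, rfl⟩ := mem_filter.1 hc
      refine (Nat.mul_le_mul_left _ (card_le_card ?_)).trans (mem_filter.1 hcB).2.le
      exact filter_subset_filter _ (filter_subset _ s)
  refine Nat.le_of_mul_le_mul_left ?_ (card_pos.2 ⟨f c, hf c hc⟩)
  calc #t * (k * #B) = ∑ v ∈ t, k * #t * #{c ∈ B | f c = v} := by
        rw [← mul_sum, ← card_eq_sum_card_fiberwise hBf, ← mul_assoc, mul_comm k]
    _ ≤ #t * #s := by simpa using sum_le_card_nsmul _ _ _ hfiber

theorem IsC6Free.card_pow_three_le_of_isC4Free (h₆ : IsC6Free E) (h₄ : IsC4Free E)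
    (hUV : E ⊆ U ×ˢ V) (hlt : 8 * (#U + #V) < #E) : #E ^ 3 ≤ 128 * (#U * #V) ^ 2 := by
  classical
  let paths (e : α × β) : ℕ := #({f ∈ E | f.2 = e.2}.erase e) * #({g ∈ E | g.1 = e.1}.erase e)
  let lowU : Finset (α × β) := {e ∈ E | 4 * #U * #{g ∈ E | g.1 = e.1} < #E}
  let lowV : Finset (α × β) := {e ∈ E | 4 * #V * #{f ∈ E | f.2 = e.2} < #E}
  have hcard : #E ≤ 2 * #(E \ (lowU ∪ lowV)) := by
    have hU : 4 * #lowU ≤ #E :=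
      mul_card_filter_card_fiber_lt_le E U (fun e he ↦ (mem_product.1 (hUV he)).1) 4
    have hV : 4 * #lowV ≤ #E :=
      mul_card_filter_card_fiber_lt_le E V (fun e he ↦ (mem_product.1 (hUV he)).2) 4
    have hUV : #(lowU ∪ lowV) ≤ #lowU + #lowV := card_union_le lowU lowV
    have hsdiff : #E - #(lowU ∪ lowV) ≤ #(E \ (lowU ∪ lowV)) := le_card_sdiff _ _
    omega
  have hdegree {u p : ℕ} (hu : 8 * u < #E) (hp : ¬ 4 * u * p < #E) : #E ≤ 8 * u * (p - 1) := by
    obtain _ | _ | p := p <;> simp <;> nlinarith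
  have hpaths (e : α × β) (he : e ∈ E \ (lowU ∪ lowV)) : #E ^ 2 ≤ 64 * (#U * #V) * paths e := by
    simp only [mem_sdiff, mem_union, lowU, lowV, mem_filter, not_or, not_and] at he
    obtain ⟨heE, hU, hV⟩ := he
    have hU' := hdegree (by omega) (hU heE)
    have hV' := hdegree (by omega) (hV heE)
    simp only [paths]
    rw [card_erase_of_mem (by simp [heE]), card_erase_of_mem (by simp [heE])]
    linarith [Nat.mul_le_mul hU' hV']
  calc #E ^ 3 = #E * #E ^ 2 := by ring
    _ ≤ 2 * #(E \ (lowU ∪ lowV)) * #E ^ 2 := Nat.mul_le_mul_right _ hcard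
    _ = 2 * ∑ e ∈ E \ (lowU ∪ lowV), #E ^ 2 := by rw [sum_const, smul_eq_mul, mul_assoc]
    _ ≤ 2 * ∑ e ∈ E \ (lowU ∪ lowV), 64 * (#U * #V) * paths e :=
      Nat.mul_le_mul_left 2 (sum_le_sum hpaths)
    _ ≤ 2 * ∑ e ∈ E, 64 * (#U * #V) * paths e :=
      Nat.mul_le_mul_left 2 (sum_le_sum_of_subset sdiff_subset)
    _ = 128 * (#U * #V) * ∑ e ∈ E, paths e := by rw [← mul_sum]; ring
    _ ≤ 128 * (#U * #V) * (#U * #V) := Nat.mul_le_mul_left _ (h₆.sum_card_mul_card_le h₄ hUV)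
    _ = 128 * (#U * #V) ^ 2 := by ring

theorem IsC6Free.card_le_add_rpow (hE : IsC6Free E) (hUV : E ⊆ U ×ˢ V) :
    (#E : ℝ) ≤ 32 * (#U + #V) + 24 * (#U * #V : ℝ) ^ (2 / 3 : ℝ) := by
  obtain ⟨F, hFE, hF, hEF⟩ := hE.exists_isC4Free_subset
  replace hEF : (#E : ℝ) ≤ 4 * #F := mod_cast hEF
  have hUV_nonneg : 0 ≤ (#U * #V : ℝ) ^ (2 / 3 : ℝ) := by positivity
  obtain hle | hlt := le_or_gt #F (8 * (#U + #V))
  · have : (#F : ℝ) ≤ 8 * (#U + #V) := mod_cast hle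
    linarith
  · have hcube : (#F : ℝ) ^ 3 ≤ (6 * (#U * #V : ℝ) ^ (2 / 3 : ℝ)) ^ 3 := calc
      (#F : ℝ) ^ 3 ≤ 128 * (#U * #V : ℝ) ^ 2 :=
        mod_cast (hE.mono hFE).card_pow_three_le_of_isC4Free hF (hFE.trans hUV) hlt
      _ ≤ 216 * (#U * #V : ℝ) ^ 2 := by gcongr; norm_num
      _ = (6 * (#U * #V : ℝ) ^ (2 / 3 : ℝ)) ^ 3 := by
        rw [mul_pow 6, ← Real.rpow_mul_natCast (by positivity)]
        norm_num
    have := le_of_pow_le_pow_left₀ three_ne_zero (by positivity) hcube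
    linarith [Nat.cast_nonneg (α := ℝ) #U, Nat.cast_nonneg (α := ℝ) #V]

end CyclesInBipartiteGraphs

section Factorizations

theorem NoSixSquareProduct.isC6Free_image {A : Finset ℕ} (hA : NoSixSquareProduct A) (h0 : 0 ∉ A)
    {f : ℕ → ℕ × ℕ} (hf : ∀ a ∈ A, (f a).1 * (f a).2 = a) : IsC6Free (A.image f) := by
  have hmem {x y : ℕ} (h : (x, y) ∈ A.image f) : x * y ∈ A ∧ f (x * y) = (x, y) := by
    obtain ⟨a, ha, hfa⟩ := mem_image.1 h
    obtain rfl : x * y = a := by simpa [hfa] using hf a ha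
    exact ⟨ha, hfa⟩
  have hpos {x y : ℕ} (h : x * y ∈ A) : 0 < x * y :=
    Nat.pos_of_ne_zero fun hxy ↦ h0 (hxy ▸ h)
  intro x₁ x₂ x₃ y₁ y₂ y₃ hx₁₂ hx₁₃ hx₂₃ hy₁₂ hy₁₃ hy₂₃ h₁₁ h₂₁ h₂₂ h₃₂ h₃₃ h₁₃
  obtain ⟨h₁₁, hf₁₁⟩ := hmem h₁₁
  obtain ⟨h₂₁, hf₂₁⟩ := hmem h₂₁
  obtain ⟨h₂₂, hf₂₂⟩ := hmem h₂₂
  obtain ⟨h₃₂, hf₃₂⟩ := hmem h₃₂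
  obtain ⟨h₃₃, hf₃₃⟩ := hmem h₃₃
  obtain ⟨h₁₃, hf₁₃⟩ := hmem h₁₃
  refine hA ⟨_, _, _, _, _, _, h₁₁, h₂₁, h₂₂, h₃₂, h₃₃, h₁₃, List.Nodup.of_map f ?_,
    x₁ * y₁ * (x₂ * y₂) * (x₃ * y₃), ?_, by ring⟩
  · simp [hf₁₁, hf₂₁, hf₂₂, hf₃₂, hf₃₃, hf₁₃, hx₁₂, hx₁₃, hx₂₃, hy₁₂, hy₁₃, hy₂₃, hx₁₂.symm,
      hx₁₃.symm]
  · exact Nat.mul_pos (Nat.mul_pos (hpos h₁₁) (hpos h₂₂)) (hpos h₃₃)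

/-- `u` is `z`-rough: all of its prime factors exceed the real number `z`. -/
def IsRough (z : ℝ) (u : ℕ) : Prop :=
  ∀ ⦃p : ℕ⦄, p.Prime → p ∣ u → z < p

theorem IsRough.of_dvd {z : ℝ} {u v : ℕ} (hv : IsRough z v) (huv : u ∣ v) : IsRough z u :=
  fun _ hp hpu ↦ hv hp (hpu.trans huv)

theorem le_of_mul_le_mul_of_le {b c u v : ℝ} (hu : 0 ≤ u) (hc : 0 < c) (huv : u * v ≤ b * c)
    (hcv : c ≤ v) : u ≤ b :=
  le_of_mul_le_mul_right ((mul_le_mul_of_nonneg_left hcv hu).trans huv) hc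

/- Take `s` to be the largest divisor of `a` with `s ≤ y`, so that `y < s * p ≤ y ^ 2` for every
prime `p ∣ a / s`. -/
theorem exists_mul_eq_of_forall_prime_le {y z : ℝ} (hy : 1 ≤ y) {a : ℕ} (hya : y ^ 2 < a)
    (hay : a ≤ y ^ 3) (hprime : ∀ p : ℕ, p.Prime → p ∣ a → p ≤ y) :
    ∃ u v : ℕ, u * v = a ∧ u ≤ y ^ 2 ∧ v ≤ y ^ 2 ∧ (IsRough z u ∨ y < u ∧ u ≤ y * z) := by
  have ha : a ≠ 0 := by
    rintro rfl
    exact hya.not_ge (by simpa using sq_nonneg y)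
  obtain ⟨s, hs, hmax⟩ : ∃ s ∈ {d ∈ a.divisors | (d : ℕ) ≤ y},
      ∀ d ∈ {d ∈ a.divisors | (d : ℕ) ≤ y}, d ≤ s := exists_max_image _ id ⟨1, by simp [ha, hy]⟩
  simp only [mem_filter, Nat.mem_divisors, and_imp] at hs hmax
  obtain ⟨⟨⟨r, rfl⟩, -⟩, hsy⟩ := hs
  have hsp {p : ℕ} (hp : p.Prime) (hpr : p ∣ r) : y < (s * p : ℕ) ∧ (s * p : ℕ) ≤ y ^ 2 := by
    constructor
    · by_contra! hle
      have hs : 0 < s := Nat.pos_of_ne_zero (left_ne_zero_of_mul ha)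
      exact (lt_mul_of_one_lt_right hs hp.one_lt).not_ge
        (hmax (s * p) (mul_dvd_mul_left s hpr) ha hle)
    · push_cast
      have := hprime p hp (hpr.mul_left s)
      rw [sq]
      gcongr
  have hcofactor {u p : ℕ} (hp : p.Prime) (hr : r = p * u) : (u : ℝ) ≤ y ^ 2 := by
    refine le_of_mul_le_mul_of_le (c := y) (v := (s * p : ℕ)) u.cast_nonneg (by positivity) ?_
      (hsp hp ⟨u, hr⟩).1.le
    rw [hr] at hay
    push_cast at hay ⊢
    linarith
  by_cases hr : IsRough z r
  · have hr1 : r ≠ 1 := by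
      rintro rfl
      rw [mul_one] at hya
      nlinarith
    obtain ⟨p, hp, u, hu⟩ := Nat.exists_prime_and_dvd hr1
    exact ⟨u, s * p, by rw [hu]; ring, hcofactor hp hu, (hsp hp ⟨u, hu⟩).2,
      .inl (hr.of_dvd ⟨p, by rw [hu, mul_comm]⟩)⟩
  · simp only [IsRough, not_forall, not_lt] at hr
    obtain ⟨p, hp, ⟨v, hv⟩, hpz⟩ := hr
    obtain ⟨hlt, hle⟩ := hsp hp ⟨v, hv⟩
    refine ⟨s * p, v, by rw [hv, mul_assoc], hle, hcofactor hp hv, .inr ⟨hlt, ?_⟩⟩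
    push_cast
    gcongr

theorem exists_mul_eq_of_le_pow_three {y z : ℝ} (hy : 1 ≤ y) (hz : 0 ≤ z) {a : ℕ}
    (ha : a ≤ y ^ 3) : ∃ u v : ℕ, u * v = a ∧
      (u ≤ y ∧ (v.Prime ∨ v ≤ y ^ 2) ∨ y < u ∧ u ≤ y ^ 2 ∧ (IsRough z u ∨ u ≤ y * z)) := by
  obtain hay | hay := le_or_gt (a : ℝ) (y ^ 2)
  · exact ⟨1, a, one_mul a, .inl ⟨by simpa using hy, .inr hay⟩⟩
  by_cases! hprime : ∀ p : ℕ, p.Prime → p ∣ a → (p : ℝ) ≤ y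
  · obtain ⟨u, v, huv, hu, hv, h⟩ := exists_mul_eq_of_forall_prime_le (z := z) hy hay ha hprime
    obtain huy | huy := le_or_gt (u : ℝ) y
    · exact ⟨u, v, huv, .inl ⟨huy, .inr hv⟩⟩
    · exact ⟨u, v, huv, .inr ⟨huy, hu, h.imp_right And.right⟩⟩
  obtain ⟨p, hp, ⟨r, rfl⟩, hyp⟩ := hprime
  obtain hpy | hpy := le_or_gt (p : ℝ) (y ^ 2)
  · refine ⟨p, r, rfl, .inr ⟨hyp, hpy, ?_⟩⟩
    obtain hpz | hzp := le_or_gt (p : ℝ) z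
    · exact .inr (hpz.trans (le_mul_of_one_le_left hz hy))
    · exact .inl fun q hq hqp ↦ (Nat.prime_dvd_prime_iff_eq hq hp).1 hqp ▸ hzp
  · refine ⟨r, p, mul_comm r p, .inl ⟨?_, .inl hp⟩⟩
    refine le_of_mul_le_mul_of_le (c := y ^ 2) r.cast_nonneg (by positivity) ?_ hpy.le
    push_cast at ha
    linarith

theorem sum_min_two_card_filter_le {m n : ℕ} {E : Finset (ℕ × ℕ)} (U : Finset ℕ)
    (hpos : ∀ e ∈ E, 0 < e.1) (hn : ∀ e ∈ E, e.1 * e.2 ≤ n) (hv : ∀ e ∈ E, e.2.Prime ∨ e.2 ≤ m) :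
    ∑ v ∈ Icc 1 n, min 2 #{u ∈ U | (u, v) ∈ E} ≤
      n.primeCounting + (n / 2).primeCounting + 2 * m := by
  have hdeg (v : ℕ) (hv0 : v ∈ Icc 1 n) : min 2 #{u ∈ U | (u, v) ∈ E} ≤
      (if v ∈ n.primesLE then 1 else 0) + (if v ∈ (n / 2).primesLE then 1 else 0) +
        2 * if v ∈ Icc 1 m then 1 else 0 := by
    rw [mem_Icc] at hv0
    obtain hempty | ⟨u, hu⟩ := eq_empty_or_nonempty {u ∈ U | (u, v) ∈ E}
    · simp [hempty]
    obtain hprime | hvm := hv _ (mem_filter.1 hu).2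
    · obtain hvn | hvn := le_or_gt v (n / 2)
      · simp [Nat.mem_primesLE, hprime, hv0.2, hvn]
      · have hsub : {u ∈ U | (u, v) ∈ E} ⊆ {1} := fun w hw ↦ by
          have hwE := (mem_filter.1 hw).2
          have hw0 : 0 < w := hpos _ hwE
          have hwv : w * v ≤ n := hn _ hwE
          rw [mem_singleton]
          by_contra hw1
          have : 2 * v ≤ w * v := Nat.mul_le_mul_right v (by omega)
          omega
        have hdeg_le : #{u ∈ U | (u, v) ∈ E} ≤ 1 := card_le_card hsub
        simp only [Nat.mem_primesLE, hprime, hv0.2, and_self, if_true]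
        omega
    · simp only [mem_Icc, hv0.1, hvm, and_self, if_true]
      omega
  calc ∑ v ∈ Icc 1 n, min 2 #{u ∈ U | (u, v) ∈ E}
      ≤ #{v ∈ Icc 1 n | v ∈ n.primesLE} + #{v ∈ Icc 1 n | v ∈ (n / 2).primesLE} +
        2 * #{v ∈ Icc 1 n | v ∈ Icc 1 m} := by
        simp_rw [card_filter _ (Icc 1 n), mul_sum, ← sum_add_distrib]
        exact sum_le_sum hdeg
    _ ≤ #n.primesLE + #(n / 2).primesLE + 2 * #(Icc 1 m) := by
      simp_rw [filter_mem_eq_inter]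
      gcongr <;> exact inter_subset_right
    _ = n.primeCounting + (n / 2).primeCounting + 2 * m := by
      simp [Nat.primesLE_card_eq_primeCounting]

theorem IsC6Free.card_le_primeCounting_add {E : Finset (ℕ × ℕ)} (hE : IsC6Free E) {n : ℕ} {y : ℝ}
    (hy : 0 ≤ y) (hpos : ∀ e ∈ E, 0 < e.1 * e.2) (hn : ∀ e ∈ E, e.1 * e.2 ≤ n)
    (hu : ∀ e ∈ E, e.1 ≤ y) (hv : ∀ e ∈ E, e.2.Prime ∨ e.2 ≤ y ^ 2) :
    (#E : ℝ) ≤ n.primeCounting + (n / 2).primeCounting + 4 * y ^ 2 := by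
  have hpos' (e : ℕ × ℕ) (he : e ∈ E) : 0 < e.1 ∧ 0 < e.2 :=
    CanonicallyOrderedAdd.mul_pos.1 (hpos e he)
  have hE_sub : E ⊆ Icc 1 ⌊y⌋₊ ×ˢ Icc 1 n := fun e he ↦ by
    obtain ⟨he₁, he₂⟩ := hpos' e he
    exact mem_product.2 ⟨mem_Icc.2 ⟨he₁, Nat.le_floor (hu e he)⟩,
      mem_Icc.2 ⟨he₂, (Nat.le_mul_of_pos_left _ he₁).trans (hn e he)⟩⟩
  have hcard : #E ≤ n.primeCounting + (n / 2).primeCounting + 2 * ⌊y ^ 2⌋₊ + 2 * ⌊y⌋₊ ^ 2 := by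
    have hsum := sum_min_two_card_filter_le (m := ⌊y ^ 2⌋₊) (Icc 1 ⌊y⌋₊) (fun e he ↦ (hpos' e he).1)
      hn fun e he ↦ (hv e he).imp_right Nat.le_floor
    have hgraph := hE.card_le_sum_min_two_add hE_sub
    rw [Nat.card_Icc, Nat.add_sub_cancel] at hgraph
    omega
  calc (#E : ℝ) ≤ n.primeCounting + (n / 2).primeCounting + 2 * ⌊y ^ 2⌋₊ + 2 * ⌊y⌋₊ ^ 2 :=
        mod_cast hcard
    _ ≤ n.primeCounting + (n / 2).primeCounting + 2 * y ^ 2 + 2 * y ^ 2 := by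
      gcongr
      · exact Nat.floor_le (sq_nonneg y)
      · exact Nat.floor_le hy
    _ = n.primeCounting + (n / 2).primeCounting + 4 * y ^ 2 := by ring

end Factorizations

section DyadicDecomposition

theorem sum_rpow_le_card_rpow_mul_rpow_sum {ι : Type*} (s : Finset ι) {x : ι → ℝ}
    (hx : ∀ i ∈ s, 0 ≤ x i) {p : ℝ} (hp : 0 < p) (hp1 : p ≤ 1) :
    ∑ i ∈ s, x i ^ p ≤ #s ^ (1 - p) * (∑ i ∈ s, x i) ^ p := by
  have hpow (i : ι) (hi : i ∈ s) : (x i ^ p) ^ p⁻¹ = x i := Real.rpow_rpow_inv (hx i hi) hp.ne'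
  have hnonneg (i : ι) (hi : i ∈ s) : 0 ≤ x i ^ p := Real.rpow_nonneg (hx i hi) p
  have hmean :=
    Real.rpow_sum_le_const_mul_sum_rpow_of_nonneg s (one_le_inv_iff₀.2 ⟨hp, hp1⟩) hnonneg
  rw [sum_congr rfl hpow] at hmean
  have hsum : 0 ≤ ∑ i ∈ s, x i := sum_nonneg hx
  calc ∑ i ∈ s, x i ^ p = ((∑ i ∈ s, x i ^ p) ^ p⁻¹) ^ p :=
        (Real.rpow_inv_rpow (sum_nonneg hnonneg) hp.ne').symm
    _ ≤ (#s ^ (p⁻¹ - 1) * ∑ i ∈ s, x i) ^ p :=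
      Real.rpow_le_rpow (Real.rpow_nonneg (sum_nonneg hnonneg) _) hmean hp.le
    _ = #s ^ (1 - p) * (∑ i ∈ s, x i) ^ p := by
      rw [Real.mul_rpow (by positivity) hsum, ← Real.rpow_mul (by positivity), sub_mul,
        inv_mul_cancel₀ hp.ne', one_mul]

theorem card_mul_div_two_pow_le {U : Finset ℕ} {i : ℕ} (hU : ∀ u ∈ U, 0 < u ∧ Nat.log 2 u = i)
    {X : ℝ} (hX : 0 ≤ X) : #U * (X / 2 ^ i) ≤ 2 * X * ∑ u ∈ U, (u : ℝ)⁻¹ := by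
  rw [mul_sum, ← nsmul_eq_mul, ← sum_const]
  refine sum_le_sum fun u hu ↦ ?_
  obtain ⟨hu0, rfl⟩ := hU u hu
  have hlt : (u : ℝ) ≤ 2 ^ (Nat.log 2 u + 1) := mod_cast (Nat.lt_pow_succ_log_self one_lt_two u).le
  rw [← div_eq_mul_inv, div_le_div_iff₀ (by positivity) (by positivity)]
  calc X * u ≤ X * 2 ^ (Nat.log 2 u + 1) := by gcongr
    _ = 2 * X * 2 ^ Nat.log 2 u := by ring

theorem IsC6Free.card_le_of_forall_log_eq {E : Finset (ℕ × ℕ)} (hE : IsC6Free E) {X : ℝ}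
    (hX : 0 ≤ X) (hpos : ∀ e ∈ E, 0 < e.1 * e.2) (hle : ∀ e ∈ E, (e.1 * e.2 : ℕ) ≤ X) {i : ℕ}
    (hi : ∀ e ∈ E, Nat.log 2 e.1 = i) :
    (#E : ℝ) ≤ 32 * (#(E.image Prod.fst) + X / 2 ^ i) +
      24 * (2 * X * ∑ u ∈ E.image Prod.fst, (u : ℝ)⁻¹) ^ (2 / 3 : ℝ) := by
  have hpos' (e : ℕ × ℕ) (he : e ∈ E) : 0 < e.1 ∧ 0 < e.2 :=
    CanonicallyOrderedAdd.mul_pos.1 (hpos e he)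
  have hsub : E ⊆ E.image Prod.fst ×ˢ Icc 1 ⌊X / 2 ^ i⌋₊ := fun e he ↦ by
    have hpow : (2 : ℝ) ^ i ≤ e.1 := hi e he ▸ mod_cast Nat.pow_log_le_self 2 (hpos' e he).1.ne'
    have hv : (e.2 : ℝ) ≤ X / 2 ^ i := by
      rw [le_div_iff₀' (by positivity)]
      calc (2 : ℝ) ^ i * e.2 ≤ e.1 * e.2 := by gcongr
        _ ≤ X := mod_cast hle e he
    exact mem_product.2 ⟨mem_image_of_mem _ he, mem_Icc.2 ⟨(hpos' e he).2, Nat.le_floor hv⟩⟩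
  have hfloor : (#(Icc 1 ⌊X / 2 ^ i⌋₊) : ℝ) ≤ X / 2 ^ i := by
    rw [Nat.card_Icc, Nat.add_sub_cancel]
    exact Nat.floor_le (by positivity)
  have hprod : (#(E.image Prod.fst) * #(Icc 1 ⌊X / 2 ^ i⌋₊) : ℝ) ≤
      2 * X * ∑ u ∈ E.image Prod.fst, (u : ℝ)⁻¹ := by
    refine (mul_le_mul_of_nonneg_left hfloor (Nat.cast_nonneg _)).trans
      (card_mul_div_two_pow_le (forall_mem_image.2 fun e he ↦ ?_) hX)
    exact ⟨(hpos' e he).1, hi e he⟩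
  refine (hE.card_le_add_rpow hsub).trans ?_
  gcongr

theorem IsC6Free.card_le_dyadic {E : Finset (ℕ × ℕ)} (hE : IsC6Free E) {X : ℝ} (hX : 0 ≤ X)
    (hpos : ∀ e ∈ E, 0 < e.1 * e.2) (hle : ∀ e ∈ E, (e.1 * e.2 : ℕ) ≤ X) {I : Finset ℕ}
    (hI : ∀ e ∈ E, Nat.log 2 e.1 ∈ I) :
    (#E : ℝ) ≤ 32 * (#(E.image Prod.fst) + ∑ i ∈ I, X / 2 ^ i) +
      24 * (#I ^ (1 / 3 : ℝ) * (2 * X * ∑ u ∈ E.image Prod.fst, (u : ℝ)⁻¹) ^ (2 / 3 : ℝ)) := by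
  set S := E.image Prod.fst
  have hSI : ∀ u ∈ S, Nat.log 2 u ∈ I := forall_mem_image.2 hI
  let S' (i : ℕ) : Finset ℕ := {u ∈ S | Nat.log 2 u = i}
  have hscale (i : ℕ) : (#{e ∈ E | Nat.log 2 e.1 = i} : ℝ) ≤ 32 * (#(S' i) + X / 2 ^ i) +
      24 * (2 * X * ∑ u ∈ S' i, (u : ℝ)⁻¹) ^ (2 / 3 : ℝ) := by
    have himage : {e ∈ E | Nat.log 2 e.1 = i}.image Prod.fst = S' i :=
      (filter_image (p := fun u ↦ Nat.log 2 u = i)).symm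
    rw [← himage]
    exact (hE.mono (filter_subset _ _)).card_le_of_forall_log_eq hX
      (fun e he ↦ hpos e (mem_filter.1 he).1) (fun e he ↦ hle e (mem_filter.1 he).1)
      fun e he ↦ (mem_filter.1 he).2
  have hholder := sum_rpow_le_card_rpow_mul_rpow_sum I
    (x := fun i ↦ 2 * X * ∑ u ∈ S' i, (u : ℝ)⁻¹) (fun i _ ↦ by positivity)
    (p := 2 / 3) (by norm_num) (by norm_num)
  have hsum_card : ∑ i ∈ I, (#(S' i) : ℝ) = #S := mod_cast (card_eq_sum_card_fiberwise hSI).symm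
  rw [← mul_sum, sum_fiberwise_of_maps_to hSI] at hholder
  calc (#E : ℝ) = ∑ i ∈ I, (#{e ∈ E | Nat.log 2 e.1 = i} : ℝ) :=
        mod_cast card_eq_sum_card_fiberwise hI
    _ ≤ ∑ i ∈ I, (32 * (#(S' i) + X / 2 ^ i) +
        24 * (2 * X * ∑ u ∈ S' i, (u : ℝ)⁻¹) ^ (2 / 3 : ℝ)) := sum_le_sum fun i _ ↦ hscale i
    _ = 32 * (#S + ∑ i ∈ I, X / 2 ^ i) +
        24 * ∑ i ∈ I, (2 * X * ∑ u ∈ S' i, (u : ℝ)⁻¹) ^ (2 / 3 : ℝ) := by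
      rw [sum_add_distrib, ← mul_sum, ← mul_sum, sum_add_distrib, hsum_card]
    _ ≤ _ := by
      gcongr
      exact hholder.trans_eq (by norm_num)

theorem sum_Icc_div_two_pow_le {X : ℝ} (hX : 0 ≤ X) (a b : ℕ) :
    ∑ i ∈ Icc a b, X / 2 ^ i ≤ 2 * X / 2 ^ a := calc
  ∑ i ∈ Icc a b, X / 2 ^ i = X / 2 ^ a * ∑ i ∈ range (b + 1 - a), (1 / 2 : ℝ) ^ i := by
    rw [← Ico_add_one_right_eq_Icc, sum_Ico_eq_sum_range, mul_sum]
    refine sum_congr rfl fun i _ ↦ ?_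
    rw [pow_add, one_div_pow, div_mul_div_comm, mul_one]
  _ ≤ X / 2 ^ a * 2 := by
    gcongr
    exact sum_geometric_two_le _
  _ = 2 * X / 2 ^ a := by ring

theorem natLog_two_floor_le {x : ℝ} (hx : 1 ≤ x) : (Nat.log 2 ⌊x⌋₊ : ℝ) ≤ 3 / 2 * Real.log x := by
  have hfloor : (0 : ℝ) < ⌊x⌋₊ := mod_cast Nat.floor_pos.2 hx
  calc (Nat.log 2 ⌊x⌋₊ : ℝ) ≤ Real.logb 2 ⌊x⌋₊ := mod_cast Real.natLog_le_logb ⌊x⌋₊ 2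
    _ ≤ Real.logb 2 x :=
      Real.logb_le_logb_of_le one_lt_two hfloor (Nat.floor_le (by positivity))
    _ ≤ 3 / 2 * Real.log x := by
      rw [Real.logb, div_le_iff₀ (Real.log_pos one_lt_two)]
      nlinarith [Real.log_two_gt_d9, Real.log_nonneg hx]

theorem IsC6Free.card_le_of_le_sq {E : Finset (ℕ × ℕ)} (hE : IsC6Free E) {y : ℝ} (hy : 1 ≤ y)
    (hpos : ∀ e ∈ E, 0 < e.1 * e.2) (hle : ∀ e ∈ E, (e.1 * e.2 : ℕ) ≤ y ^ 3)
    (hu : ∀ e ∈ E, y < e.1 ∧ e.1 ≤ y ^ 2) :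
    (#E : ℝ) ≤ 160 * y ^ 2 + 24 * ((1 + 3 * Real.log y) ^ (1 / 3 : ℝ) *
      (2 * y ^ 3 * ∑ u ∈ E.image Prod.fst, (u : ℝ)⁻¹) ^ (2 / 3 : ℝ)) := by
  set I := Icc (Nat.log 2 ⌊y⌋₊) (Nat.log 2 ⌊y ^ 2⌋₊) with hI
  have hlog_mem (e : ℕ × ℕ) (he : e ∈ E) : Nat.log 2 e.1 ∈ I :=
    mem_Icc.2 ⟨Nat.log_mono_right (Nat.floor_le_of_le (hu e he).1.le),
      Nat.log_mono_right (Nat.le_floor (hu e he).2)⟩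
  have hcard_image : (#(E.image Prod.fst) : ℝ) ≤ y ^ 2 := by
    have hsub : E.image Prod.fst ⊆ Icc 1 ⌊y ^ 2⌋₊ := image_subset_iff.2 fun e he ↦
      mem_Icc.2 ⟨(CanonicallyOrderedAdd.mul_pos.1 (hpos e he)).1, Nat.le_floor (hu e he).2⟩
    calc (#(E.image Prod.fst) : ℝ) ≤ ⌊y ^ 2⌋₊ := mod_cast (card_le_card hsub).trans_eq (by simp)
      _ ≤ y ^ 2 := Nat.floor_le (sq_nonneg y)
  have hcard_scales : (#I : ℝ) ≤ 1 + 3 * Real.log y := by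
    have hlog := natLog_two_floor_le (one_le_pow₀ hy : 1 ≤ y ^ 2)
    rw [Real.log_pow] at hlog
    calc (#I : ℝ) ≤ 1 + Nat.log 2 ⌊y ^ 2⌋₊ := by
          rw [hI, Nat.card_Icc]
          exact mod_cast (Nat.sub_le _ _).trans_eq (add_comm _ _)
      _ ≤ 1 + 3 * Real.log y := by push_cast at hlog; linarith
  have hgeom : ∑ i ∈ I, y ^ 3 / 2 ^ i ≤ 4 * y ^ 2 := by
    have hlt : y < 2 ^ (Nat.log 2 ⌊y⌋₊ + 1) := by
      exact_mod_cast (Nat.floor_lt (by positivity)).1 (Nat.lt_pow_succ_log_self one_lt_two ⌊y⌋₊)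
    refine (sum_Icc_div_two_pow_le (by positivity) _ _).trans ?_
    rw [div_le_iff₀ (by positivity)]
    calc 2 * y ^ 3 = 2 * y ^ 2 * y := by ring
      _ ≤ 2 * y ^ 2 * 2 ^ (Nat.log 2 ⌊y⌋₊ + 1) := by gcongr
      _ = 4 * y ^ 2 * 2 ^ Nat.log 2 ⌊y⌋₊ := by ring
  refine (hE.card_le_dyadic (by positivity) hpos hle hlog_mem).trans (add_le_add ?_ ?_)
  · linarith
  · gcongr

end DyadicDecomposition

section ReciprocalSums

theorem sum_Icc_one_inv_eq_harmonic (n : ℕ) : ∑ i ∈ Icc 1 n, (i : ℝ)⁻¹ = harmonic n := by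
  simp [harmonic_eq_sum_Icc]

theorem IsRough.coprime {z : ℝ} {u s : ℕ} (hu : IsRough z u) (hs : s ≠ 0) (hsz : s ≤ z) :
    u.Coprime s := by
  refine Nat.coprime_of_dvd fun p hp hpu hps ↦ (hu hp hpu).not_ge ?_
  exact hsz.trans' (mod_cast Nat.le_of_dvd (Nat.pos_of_ne_zero hs) hps)

theorem injOn_mul_of_isRough {z : ℝ} {S : Finset ℕ} (hS : ∀ u ∈ S, u ≠ 0 ∧ IsRough z u) :
    Set.InjOn (fun p : ℕ × ℕ ↦ p.1 * p.2) (S ×ˢ Icc 1 ⌊z⌋₊ : Finset (ℕ × ℕ)) := by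
  have hdvd {u u' s s' : ℕ} (hu : u ∈ S) (hs' : s' ∈ Icc 1 ⌊z⌋₊) (h : u * s = u' * s') :
      u ∣ u' := by
    obtain ⟨hs'0, hs'z⟩ := mem_Icc.1 hs'
    refine ((hS u hu).2.coprime (Nat.one_le_iff_ne_zero.1 hs'0) ?_).dvd_of_dvd_mul_right ⟨s, h.symm⟩
    exact (Nat.le_floor_iff' (Nat.one_le_iff_ne_zero.1 hs'0)).1 hs'z
  rintro ⟨u, s⟩ hus ⟨u', s'⟩ hus' (h : u * s = u' * s')
  obtain ⟨hu, hs⟩ := mem_product.1 hus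
  obtain ⟨hu', hs'⟩ := mem_product.1 hus'
  obtain rfl : u = u' := Nat.dvd_antisymm (hdvd hu hs' h) (hdvd hu' hs h.symm)
  rw [Nat.eq_of_mul_eq_mul_left (Nat.pos_of_ne_zero (hS u hu).1) h]

/- The products of a `z`-rough number up to `x` with a positive integer up to `z` are distinct
integers up to `x * z`. -/
theorem sum_inv_mul_log_le_of_isRough {x z : ℝ} (hx : 1 ≤ x) (hz : 1 ≤ z) {S : Finset ℕ}
    (hS : ∀ u ∈ S, u ≠ 0 ∧ u ≤ x ∧ IsRough z u) :
    (∑ u ∈ S, (u : ℝ)⁻¹) * Real.log z ≤ 1 + Real.log (x * z) := by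
  have hinj := injOn_mul_of_isRough fun u hu ↦ ⟨(hS u hu).1, (hS u hu).2.2⟩
  set P : Finset ℕ := (S ×ˢ Icc 1 ⌊z⌋₊).image fun p ↦ p.1 * p.2
  have hsub : P ⊆ Icc 1 ⌊x * z⌋₊ := by
    refine image_subset_iff.2 fun p hp ↦ ?_
    obtain ⟨hp₁, hp₂⟩ := mem_product.1 hp
    obtain ⟨hu0, hux, -⟩ := hS _ hp₁
    obtain ⟨hs0, hsz⟩ := mem_Icc.1 hp₂
    refine mem_Icc.2 ⟨Nat.mul_pos (Nat.pos_of_ne_zero hu0) hs0, Nat.le_floor ?_⟩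
    push_cast
    gcongr
    exact (Nat.le_floor_iff (by positivity)).1 hsz
  calc (∑ u ∈ S, (u : ℝ)⁻¹) * Real.log z
      ≤ (∑ u ∈ S, (u : ℝ)⁻¹) * ∑ s ∈ Icc 1 ⌊z⌋₊, (s : ℝ)⁻¹ := by
        rw [sum_Icc_one_inv_eq_harmonic]
        gcongr
        exact log_le_harmonic_floor z (by positivity)
    _ = ∑ m ∈ P, (m : ℝ)⁻¹ := by
      rw [sum_image hinj, sum_mul_sum, ← sum_product']
      push_cast
      simp_rw [mul_inv]
    _ ≤ ∑ m ∈ Icc 1 ⌊x * z⌋₊, (m : ℝ)⁻¹ :=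
      sum_le_sum_of_subset_of_nonneg hsub fun m _ _ ↦ by positivity
    _ ≤ 1 + Real.log (x * z) := by
      rw [sum_Icc_one_inv_eq_harmonic]
      exact harmonic_floor_le_one_add_log _ (one_le_mul_of_one_le_of_one_le hx hz)

theorem sum_inv_le_one_add_log_sub_log {a b : ℝ} (ha : 0 ≤ a) (hab : a ≤ b) (hb : 1 ≤ b)
    {S : Finset ℕ} (hS : ∀ u ∈ S, a < u ∧ u ≤ b) :
    ∑ u ∈ S, (u : ℝ)⁻¹ ≤ 1 + (Real.log b - Real.log a) := by
  have hdisj : Disjoint S (Icc 1 ⌊a⌋₊) := disjoint_left.2 fun u hu hua ↦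
    (hS u hu).1.not_ge ((Nat.le_floor_iff ha).1 (mem_Icc.1 hua).2)
  have hsub : S ∪ Icc 1 ⌊a⌋₊ ⊆ Icc 1 ⌊b⌋₊ := by
    refine union_subset (fun u hu ↦ mem_Icc.2 ⟨?_, Nat.le_floor (hS u hu).2⟩)
      (Icc_subset_Icc_right (Nat.floor_mono hab))
    exact_mod_cast ha.trans_lt (hS u hu).1
  have hsum : ∑ u ∈ S, (u : ℝ)⁻¹ + ∑ u ∈ Icc 1 ⌊a⌋₊, (u : ℝ)⁻¹ ≤ ∑ u ∈ Icc 1 ⌊b⌋₊, (u : ℝ)⁻¹ := by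
    rw [← sum_union hdisj]
    exact sum_le_sum_of_subset_of_nonneg hsub fun m _ _ ↦ by positivity
  simp only [sum_Icc_one_inv_eq_harmonic] at hsum
  linarith [log_le_harmonic_floor a ha, harmonic_floor_le_one_add_log b hb]

/- The choice `log z = t`, of the order of `√(log y)`, balances the two kinds of `u`. -/
theorem sum_inv_le_mul {t y : ℝ} (ht : 0 < t) (ht2 : 1 ≤ 2 * t ^ 2) (hy : 1 ≤ y)
    (hyt : 3 * Real.log y = t ^ 2) {S : Finset ℕ}
    (hS : ∀ u ∈ S, y < u ∧ u ≤ y ^ 2 ∧ (IsRough (Real.exp t) u ∨ u ≤ y * Real.exp t)) :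
    ∑ u ∈ S, (u : ℝ)⁻¹ ≤ 7 * t := by
  classical
  have hy0 : 0 < y := by positivity
  have hexp : 1 ≤ Real.exp t := Real.one_le_exp ht.le
  have hrough : (∑ u ∈ S with IsRough (Real.exp t) u, (u : ℝ)⁻¹) * t ≤ 1 + (2 / 3 * t ^ 2 + t) := by
    have := sum_inv_mul_log_le_of_isRough (one_le_pow₀ hy : 1 ≤ y ^ 2) hexp
      (S := {u ∈ S | IsRough (Real.exp t) u}) fun u hu ↦ by
        obtain ⟨hu, hru⟩ := mem_filter.1 hu
        exact ⟨mod_cast (hy0.trans (hS u hu).1).ne', (hS u hu).2.1, hru⟩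
    rw [Real.log_exp, Real.log_mul (by positivity) (Real.exp_ne_zero t), Real.log_exp,
      Real.log_pow] at this
    push_cast at this
    linarith
  have hwindow : ∑ u ∈ S with ¬ IsRough (Real.exp t) u, (u : ℝ)⁻¹ ≤ 1 + t := by
    have := sum_inv_le_one_add_log_sub_log hy0.le (le_mul_of_one_le_right hy0.le hexp)
      (one_le_mul_of_one_le_of_one_le hy hexp)
      (S := {u ∈ S | ¬ IsRough (Real.exp t) u}) fun u hu ↦ by
        obtain ⟨hu, hru⟩ := mem_filter.1 hu
        exact ⟨(hS u hu).1, (hS u hu).2.2.resolve_left hru⟩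
    rw [Real.log_mul hy0.ne' (Real.exp_ne_zero t), Real.log_exp] at this
    linarith
  rw [← sum_filter_add_sum_filter_not S (IsRough (Real.exp t))]
  refine le_of_mul_le_mul_right ?_ ht
  nlinarith

end ReciprocalSums

section CardinalityBound

theorem IsC6Free.card_le_of_factorization {E : Finset (ℕ × ℕ)} (hE : IsC6Free E) {n : ℕ}
    {t y : ℝ} (ht : 0 < t) (ht2 : 1 ≤ 2 * t ^ 2) (hy : 1 ≤ y) (hyt : 3 * Real.log y = t ^ 2)
    (hyn : y ^ 3 = n) (hEn : ∀ e ∈ E, e.1 * e.2 ∈ Icc 1 n)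
    (hfactor : ∀ e ∈ E, e.1 ≤ y ∧ (e.2.Prime ∨ e.2 ≤ y ^ 2) ∨ y < e.1 ∧ e.1 ≤ y ^ 2 ∧
      (IsRough (Real.exp t) e.1 ∨ e.1 ≤ y * Real.exp t)) :
    (#E : ℝ) ≤ n.primeCounting + (n / 2).primeCounting + 164 * y ^ 2 +
      24 * ((1 + t ^ 2) ^ (1 / 3 : ℝ) * (2 * y ^ 3 * (7 * t)) ^ (2 / 3 : ℝ)) := by
  classical
  have hsmall : ∀ e ∈ {e ∈ E | (e.1 : ℝ) ≤ y},
      e ∈ E ∧ e.1 ≤ y ∧ (e.2.Prime ∨ e.2 ≤ y ^ 2) := by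
    intro e he
    obtain ⟨he, hey⟩ := mem_filter.1 he
    exact ⟨he, (hfactor e he).resolve_right fun h ↦ h.1.not_ge hey⟩
  have hlarge : ∀ e ∈ {e ∈ E | ¬ (e.1 : ℝ) ≤ y},
      e ∈ E ∧ y < e.1 ∧ e.1 ≤ y ^ 2 ∧ (IsRough (Real.exp t) e.1 ∨ e.1 ≤ y * Real.exp t) := by
    intro e he
    obtain ⟨he, hey⟩ := mem_filter.1 he
    exact ⟨he, (hfactor e he).resolve_left fun h ↦ hey h.1⟩
  have hpos {e : ℕ × ℕ} (he : e ∈ E) : 0 < e.1 * e.2 := (mem_Icc.1 (hEn e he)).1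
  have hle {e : ℕ × ℕ} (he : e ∈ E) : e.1 * e.2 ≤ n := (mem_Icc.1 (hEn e he)).2
  have hcard_small := (hE.mono (filter_subset _ _)).card_le_primeCounting_add (by positivity)
    (fun e he ↦ hpos (hsmall e he).1) (fun e he ↦ hle (hsmall e he).1)
    (fun e he ↦ (hsmall e he).2.1) fun e he ↦ (hsmall e he).2.2
  have hcard_large := (hE.mono (filter_subset _ _)).card_le_of_le_sq hy
    (fun e he ↦ hpos (hlarge e he).1) (fun e he ↦ hyn ▸ mod_cast hle (hlarge e he).1)
    fun e he ↦ ⟨(hlarge e he).2.1, (hlarge e he).2.2.1⟩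
  have hsum := sum_inv_le_mul ht ht2 hy hyt (forall_mem_image.2 fun e he ↦ (hlarge e he).2)
  rw [← card_filter_add_card_filter_not fun e : ℕ × ℕ ↦ (e.1 : ℝ) ≤ y, Nat.cast_add]
  calc _ ≤ (n.primeCounting + (n / 2).primeCounting + 4 * y ^ 2 : ℝ) + (160 * y ^ 2 +
        24 * ((1 + t ^ 2) ^ (1 / 3 : ℝ) * (2 * y ^ 3 * (7 * t)) ^ (2 / 3 : ℝ))) := by
        refine add_le_add hcard_small (hcard_large.trans ?_)
        rw [hyt]
        gcongr
    _ = _ := by ring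

theorem NoSixSquareProduct.card_le {A : Finset ℕ} (hA : NoSixSquareProduct A) {n : ℕ}
    (hAn : A ⊆ Icc 1 n) {t y : ℝ} (ht : 0 < t) (ht2 : 1 ≤ 2 * t ^ 2) (hy : 1 ≤ y)
    (hyt : 3 * Real.log y = t ^ 2) (hyn : y ^ 3 = n) :
    (#A : ℝ) ≤ n.primeCounting + (n / 2).primeCounting + 164 * y ^ 2 +
      24 * ((1 + t ^ 2) ^ (1 / 3 : ℝ) * (2 * y ^ 3 * (7 * t)) ^ (2 / 3 : ℝ)) := by
  have hfactor (a : ℕ) (ha : a ∈ A) : ∃ e : ℕ × ℕ, e.1 * e.2 = a ∧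
      (e.1 ≤ y ∧ (e.2.Prime ∨ e.2 ≤ y ^ 2) ∨ y < e.1 ∧ e.1 ≤ y ^ 2 ∧
        (IsRough (Real.exp t) e.1 ∨ e.1 ≤ y * Real.exp t)) := by
    have hay : a ≤ y ^ 3 := hyn ▸ mod_cast (mem_Icc.1 (hAn ha)).2
    obtain ⟨u, v, huv⟩ := exists_mul_eq_of_le_pow_three hy (Real.exp_pos t).le hay
    exact ⟨(u, v), huv⟩
  choose! f hf hfactor using hfactor
  have hinj : Set.InjOn f A := fun a ha b hb hab ↦ by rw [← hf a ha, hab, hf b hb]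
  rw [← card_image_of_injOn hinj]
  exact (hA.isC6Free_image (fun h0 ↦ by simpa using hAn h0) hf).card_le_of_factorization ht ht2 hy
    hyt hyn (forall_mem_image.2 fun a ha ↦ by simpa only [hf a ha] using hAn ha)
    (forall_mem_image.2 hfactor)

theorem rpow_mul_rpow_le_mul_sq_mul_rpow {L y : ℝ} (hL : 1 / 2 ≤ L) (hy : 0 ≤ y) :
    (1 + L) ^ (1 / 3 : ℝ) * (2 * y ^ 3 * (7 * √L)) ^ (2 / 3 : ℝ) ≤
      9 * (y ^ 2 * L ^ (2 / 3 : ℝ)) := by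
  have hL0 : 0 ≤ L := by linarith
  have hcube {x : ℝ} (hx : 0 ≤ x) (r : ℝ) : (x ^ (r / 3)) ^ 3 = x ^ r := by
    rw [← Real.rpow_mul_natCast hx, Nat.cast_ofNat, div_mul_cancel₀ r three_ne_zero]
  refine le_of_pow_le_pow_left₀ three_ne_zero (by positivity) ?_
  calc ((1 + L) ^ (1 / 3 : ℝ) * (2 * y ^ 3 * (7 * √L)) ^ (2 / 3 : ℝ)) ^ 3
      = (1 + L) * (2 * y ^ 3 * (7 * √L)) ^ 2 := by
        rw [mul_pow, hcube (by positivity), hcube (by positivity), Real.rpow_one, Real.rpow_two]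
    _ = 196 * (1 + L) * (y ^ 6 * √L ^ 2) := by ring
    _ ≤ 729 * L * (y ^ 6 * √L ^ 2) := mul_le_mul_of_nonneg_right (by linarith) (by positivity)
    _ = 729 * y ^ 6 * L ^ 2 := by rw [Real.sq_sqrt hL0]; ring
    _ = (9 * (y ^ 2 * L ^ (2 / 3 : ℝ))) ^ 3 := by
      rw [mul_pow, mul_pow, hcube hL0, Real.rpow_two]
      ring

theorem one_le_two_mul_rpow {L r : ℝ} (hL : 1 / 2 ≤ L) (hr0 : 0 ≤ r) (hr1 : r ≤ 1) :
    1 ≤ 2 * L ^ r := by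
  calc (1 : ℝ) = 2 * (1 / 2) ^ (1 : ℝ) := by norm_num
    _ ≤ 2 * (1 / 2) ^ r := by
      gcongr 2 * ?_
      exact Real.rpow_le_rpow_of_exponent_ge (by norm_num) (by norm_num) hr1
    _ ≤ 2 * L ^ r := by gcongr

theorem eventually_mul_log_rpow_le (C : ℝ) {a b : ℝ} (hab : a < b) :
    ∀ᶠ n : ℕ in Filter.atTop, C * Real.log n ^ a ≤ Real.log n ^ b := by
  have hlog : Filter.Tendsto (fun n : ℕ ↦ Real.log n) Filter.atTop Filter.atTop :=
    Real.tendsto_log_atTop.comp tendsto_natCast_atTop_atTop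
  filter_upwards [((tendsto_rpow_atTop (sub_pos.2 hab)).comp hlog).eventually_ge_atTop C,
    hlog.eventually_gt_atTop 0] with n hC hpos
  calc C * Real.log n ^ a ≤ Real.log n ^ (b - a) * Real.log n ^ a := by gcongr; exact hC
    _ = Real.log n ^ b := by rw [← Real.rpow_add hpos, sub_add_cancel]

theorem noSixSquareProduct_card_upper_bound_general :
    ∃ C : ℝ, ∀ n : ℕ, 2 ≤ n → ∀ A ⊆ Icc 1 n, NoSixSquareProduct A →
      (#A : ℝ) ≤ n.primeCounting + (n / 2).primeCounting +
        (n : ℝ) ^ (2 / 3 : ℝ) * (C * Real.log n ^ (2 / 3 : ℝ)) := by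
  refine ⟨544, fun n hn A hAn hA ↦ ?_⟩
  have hn1 : (1 : ℝ) ≤ n := mod_cast one_le_two.trans hn
  have hL : 1 / 2 ≤ Real.log n :=
    (by linarith [Real.log_two_gt_d9] : 1 / 2 ≤ Real.log 2).trans
      (Real.log_le_log two_pos (mod_cast hn))
  set L := Real.log n
  set y : ℝ := n ^ (1 / 3 : ℝ)
  have hsqrt : √L ^ 2 = L := Real.sq_sqrt (by linarith)
  have hy : 1 ≤ y := Real.one_le_rpow hn1 (by norm_num)
  have hlog : 3 * Real.log y = √L ^ 2 := by
    rw [hsqrt, Real.log_rpow (by positivity)]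
    ring
  have hpow (k : ℕ) : y ^ k = (n : ℝ) ^ (k / 3 : ℝ) := by
    rw [← Real.rpow_mul_natCast n.cast_nonneg]
    ring_nf
  have hbound := hA.card_le hAn (Real.sqrt_pos.2 (by linarith)) (by rw [hsqrt]; linarith) hy hlog
    (by simp [hpow])
  rw [hsqrt] at hbound
  have hmain := rpow_mul_rpow_le_mul_sq_mul_rpow hL (zero_le_one.trans hy)
  have herror := le_mul_of_one_le_right (sq_nonneg y)
    (one_le_two_mul_rpow hL (by norm_num : (0 : ℝ) ≤ 2 / 3) (by norm_num))
  have hy2 : (n : ℝ) ^ (2 / 3 : ℝ) = y ^ 2 := by simp [hpow]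
  rw [hy2]
  linarith

end CardinalityBound

theorem noSixSquareProduct_card_upper_bound :
    ∀ ε : ℝ, 0 < ε → ∃ N : ℕ, ∀ n : ℕ, N ≤ n → ∀ A : Finset ℕ, A ⊆ Finset.Icc 1 n →
      NoSixSquareProduct A →
      (A.card : ℝ) ≤ (Nat.primeCounting n : ℝ) + (Nat.primeCounting (n / 2) : ℝ) +
        (n : ℝ) ^ ((2 : ℝ) / 3) *
          Real.log n ^ ((2 : ℝ) ^ ((1 : ℝ) / 3) - 1 / 3 + ε) := by
  intro ε hε
  obtain ⟨C, hC⟩ := noSixSquareProduct_card_upper_bound_general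
  have hexp : (2 / 3 : ℝ) < 2 ^ (1 / 3 : ℝ) - 1 / 3 + ε := by
    linarith [Real.one_lt_rpow one_lt_two (by norm_num : (0 : ℝ) < 1 / 3)]
  obtain ⟨N, hN⟩ := Filter.eventually_atTop.1
    ((eventually_mul_log_rpow_le C hexp).and (Filter.eventually_ge_atTop 2))
  refine ⟨N, fun n hn A hAn hA ↦ (hC n (hN n hn).2 A hAn hA).trans ?_⟩
  gcongr
  exact (hN n hn).1
end

section
/- There exists N such that for every n ≥ N, every simple graph on n vertices containing no cycle of length 6 has fewer than n^{4/3} edges. -/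
/-- A simple graph contains no cycle of length 6. -/
def C6Free {V : Type*} (G : SimpleGraph V) : Prop :=
  ∀ (v : V) (w : G.Walk v v), w.IsCycle → w.length ≠ 6

/-!
Count the paths `x a b y` in which the pairs `x, b` and `a, y` each have at most three common
neighbours. For a fixed edge `ab`, `C₆`-freeness leaves at most one neighbour of `a` (and one of
`b`) that has too many common neighbours with the other end, so there are at least
`deg a * deg b - 3 * deg a - 3 * deg b` such paths. For fixed ends `x, y`, any two middle edges
meet, so they form a star or lie in a triangle, and the codegree condition bounds a star; hence at
most six oriented middle edges. Summing over all edges and bounding the degree products from below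
by AM-GM shows that the average degree `d` of a `C₆`-free graph on `n` vertices satisfies
`d ^ 2 * (d - 27) ≤ 6 * n`, whereas `n ^ (4 / 3)` edges would give `d ≥ 2 * n ^ (1 / 3)`.
-/

open Finset

theorem three_mul_sq_le_mul_add_cube_mul {p q t : ℝ} (hp : 0 < p) (hq : 0 < q) (ht : 0 ≤ t) :
    3 * t ^ 2 ≤ p * q + t ^ 3 * (p⁻¹ + q⁻¹) := by
  set s := √(p * q)
  have hs : 0 < s := by positivity
  have hs_sq : s ^ 2 = p * q := Real.sq_sqrt (by positivity)
  have hmean : 2 * s ≤ p + q :=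
    (pow_le_pow_iff_left₀ (by positivity) (by positivity) two_ne_zero).1
      (by linarith [sq_nonneg (p - q)])
  have hinv : 2 * s⁻¹ ≤ p⁻¹ + q⁻¹ := by
    calc 2 * s⁻¹ = 2 * s / s ^ 2 := by field_simp
      _ ≤ (p + q) / s ^ 2 := by gcongr
      _ = p⁻¹ + q⁻¹ := by rw [hs_sq]; field_simp; ring
  have hfactor : s ^ 2 + t ^ 3 * (2 * s⁻¹) - 3 * t ^ 2 = (s - t) ^ 2 * (s + 2 * t) / s := by
    field_simp
    ring
  have hnonneg : 0 ≤ (s - t) ^ 2 * (s + 2 * t) / s := by positivity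
  calc 3 * t ^ 2 ≤ s ^ 2 + t ^ 3 * (2 * s⁻¹) := by linarith
    _ ≤ p * q + t ^ 3 * (p⁻¹ + q⁻¹) := by grw [hs_sq, hinv]

theorem three_mul_mul_sub_le_add_cube_mul {g k p q t : ℝ} (hg : 0 ≤ g) (hk : 0 ≤ k) (hp : 0 < p)
    (hq : 0 < q) (ht : 0 ≤ t) (h : p * q ≤ g + k * p + k * q) :
    3 * t * (t - 3 * k) ≤ g + t ^ 3 * (p⁻¹ + q⁻¹) := by
  obtain hlt | hge := lt_or_ge t (3 * k)
  · have hleft : 3 * t * (t - 3 * k) ≤ 0 :=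
      mul_nonpos_of_nonneg_of_nonpos (by positivity) (by linarith)
    exact hleft.trans (by positivity)
  obtain hlarge | hsmall := le_total 3 (t * (p⁻¹ + q⁻¹))
  · calc 3 * t * (t - 3 * k) ≤ t ^ 2 * 3 := by linarith [mul_nonneg ht hk]
      _ ≤ t ^ 2 * (t * (p⁻¹ + q⁻¹)) := by gcongr
      _ ≤ g + t ^ 3 * (p⁻¹ + q⁻¹) := by linarith
  obtain rfl | ht_pos := ht.eq_or_lt
  · simpa using hg
  have hinv : p * q * (p⁻¹ + q⁻¹) = p + q := by field_simp; ring
  have hadd : t * (p + q) ≤ 3 * (p * q) := by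
    calc t * (p + q) = t * (p⁻¹ + q⁻¹) * (p * q) := by rw [← hinv]; ring
      _ ≤ 3 * (p * q) := by gcongr
  have herror : k * (t * (p + q)) ≤ k * (3 * (p * q)) := by gcongr
  have hnonneg : 0 ≤ 3 * k * (t ^ 3 * (p⁻¹ + q⁻¹)) := by positivity
  refine le_of_mul_le_mul_left ?_ ht_pos
  calc t * (3 * t * (t - 3 * k)) = (t - 3 * k) * (3 * t ^ 2) := by ring
    _ ≤ (t - 3 * k) * (p * q + t ^ 3 * (p⁻¹ + q⁻¹)) :=
      mul_le_mul_of_nonneg_left (three_mul_sq_le_mul_add_cube_mul hp hq ht) (by linarith)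
    _ ≤ t * (p * q - k * (p + q) + t ^ 3 * (p⁻¹ + q⁻¹)) := by linarith
    _ ≤ t * (g + t ^ 3 * (p⁻¹ + q⁻¹)) := by gcongr; linarith

theorem exists_mem_ne_ne_ne {α : Type*} {s : Set α} (hs : 3 < s.ncard) (u v w : α) :
    ∃ z ∈ s, z ≠ u ∧ z ≠ v ∧ z ≠ w := by
  classical
  have hcard : ({u, v, w} : Set α).ncard ≤ 3 := by
    simpa [← Set.ncard_coe_finset] using Finset.card_le_three (a := u) (b := v) (c := w)
  simpa using Set.exists_mem_notMem_of_ncard_lt_ncard (hcard.trans_lt hs)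

theorem exists_star_or_subset_offDiag {V : Type*} [DecidableEq V] {s : Finset (V × V)}
    (hs : s.Nonempty) (hne : ∀ e ∈ s, e.1 ≠ e.2)
    (hmeet : ∀ e ∈ s, ∀ f ∈ s, e.1 = f.1 ∨ e.1 = f.2 ∨ e.2 = f.1 ∨ e.2 = f.2) :
    (∃ c, ∀ e ∈ s, e.1 = c ∨ e.2 = c) ∨ ∃ a b c, s ⊆ ({a, b, c} : Finset V).offDiag := by
  obtain ⟨⟨a, b⟩, he⟩ := hs
  by_contra! ⟨hstar, htriangle⟩
  obtain ⟨f, hf, hfa⟩ := hstar a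
  obtain ⟨g, hg, hgb⟩ := hstar b
  obtain ⟨c, hfbc⟩ : ∃ c, f = (b, c) ∨ f = (c, b) := by grind
  have hgac : g = (a, c) ∨ g = (c, a) := by grind
  refine htriangle a b c fun d hd ↦ ?_
  have hde := hmeet d hd _ he
  have hdf := hmeet d hd f hf
  have hdg := hmeet d hd g hg
  grind

variable {V : Type*} {G : SimpleGraph V} {a b x y : V}

/-- The path `x a b y` of length three is light when each of its pairs of vertices at distance two
along the path has at most three common neighbours. The vertex `x` may be adjacent to `y`. -/
structure IsLightPath (G : SimpleGraph V) (x a b y : V) : Prop where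
  adj_left : G.Adj x a
  adj_middle : G.Adj a b
  adj_right : G.Adj b y
  left_ne : x ≠ b
  right_ne : a ≠ y
  ends_ne : x ≠ y
  ncard_left_le : (G.commonNeighbors x b).ncard ≤ 3
  ncard_right_le : (G.commonNeighbors a y).ncard ≤ 3

noncomputable instance : Decidable (IsLightPath G x a b y) :=
  Classical.propDecidable _

theorem IsLightPath.symm (h : IsLightPath G x a b y) : IsLightPath G y b a x where
  adj_left := h.adj_right.symm
  adj_middle := h.adj_middle.symm
  adj_right := h.adj_left.symm
  left_ne := h.right_ne.symm
  right_ne := h.left_ne.symm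
  ends_ne := h.ends_ne.symm
  ncard_left_le := G.commonNeighbors_symm a y ▸ h.ncard_right_le
  ncard_right_le := G.commonNeighbors_symm x b ▸ h.ncard_left_le

theorem isLightPath_comm : IsLightPath G x a b y ↔ IsLightPath G y b a x :=
  ⟨.symm, .symm⟩

theorem C6Free.not_nodup (hG : C6Free G) {a b c d e f : V} (hab : G.Adj a b) (hbc : G.Adj b c)
    (hcd : G.Adj c d) (hde : G.Adj d e) (hef : G.Adj e f) (hfa : G.Adj f a) :
    ¬ [a, b, c, d, e, f].Nodup := by
  intro hnodup
  let w : G.Walk a a := .cons hab (.cons hbc (.cons hcd (.cons hde (.cons hef (.cons hfa .nil)))))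
  refine hG a w ?_ rfl
  rw [SimpleGraph.Walk.isCycle_iff_isPath_tail_and_le_length, SimpleGraph.Walk.isPath_def]
  refine ⟨?_, by simp [w]⟩
  have hperm : w.tail.support = [a, b, c, d, e, f].rotate 1 := by simp [w]
  rw [hperm]
  exact List.nodup_rotate.2 hnodup

theorem C6Free.subsingleton_neighbors_of_three_lt_ncard (hG : C6Free G) (hab : a ≠ b) :
    {x | G.Adj a x ∧ x ≠ b ∧ 3 < (G.commonNeighbors x b).ncard}.Subsingleton := by
  rintro x ⟨hax, hxb, hx⟩ x' ⟨hax', hx'b, hx'⟩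
  by_contra hne
  -- The two choices of a common neighbour close up the hexagon `b p x a x' q`.
  obtain ⟨p, ⟨hxp, hbp⟩, hpa, hpx', -⟩ := exists_mem_ne_ne_ne hx a x' x'
  obtain ⟨q, ⟨hx'q, hbq⟩, hqa, hqx, hqp⟩ := exists_mem_ne_ne_ne hx' a x p
  refine hG.not_nodup hbp hxp.symm hax.symm hax' hx'q hbq.symm ?_
  grind [hax.ne, hax'.ne, hxp.ne, hbp.ne, hx'q.ne, hbq.ne]

section Counting

variable [Fintype V]

theorem C6Free.card_neighbors_eq_or_three_lt_ncard_le_two [DecidableEq V] [DecidableRel G.Adj]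
    (hG : C6Free G) (hab : a ≠ b) :
    #{x ∈ G.neighborFinset a | x = b ∨ 3 < (G.commonNeighbors x b).ncard} ≤ 2 := by
  set heavy : Finset V := {x | G.Adj a x ∧ x ≠ b ∧ 3 < (G.commonNeighbors x b).ncard}
  have hheavy : #heavy ≤ 1 := card_le_one_iff_subsingleton.2 <| by
    simpa [heavy] using hG.subsingleton_neighbors_of_three_lt_ncard hab
  have hsub : {x ∈ G.neighborFinset a | x = b ∨ 3 < (G.commonNeighbors x b).ncard} ⊆
      insert b heavy := by
    intro x hx
    simp only [mem_filter, SimpleGraph.mem_neighborFinset, heavy, mem_insert, mem_univ,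
      true_and] at hx ⊢
    tauto
  calc _ ≤ #(insert b heavy) := card_le_card hsub
    _ ≤ #heavy + 1 := card_insert_le ..
    _ ≤ 2 := by lia

theorem C6Free.degree_mul_degree_le [DecidableRel G.Adj] (hG : C6Free G) (hab : G.Adj a b) :
    G.degree a * G.degree b ≤
      #{e : V × V | IsLightPath G e.1 a b e.2} + 3 * G.degree a + 3 * G.degree b := by
  classical
  set light : Finset (V × V) := {e | IsLightPath G e.1 a b e.2}
  set A := {x ∈ G.neighborFinset a | x = b ∨ 3 < (G.commonNeighbors x b).ncard}
  set B := {y ∈ G.neighborFinset b | y = a ∨ 3 < (G.commonNeighbors y a).ncard}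
  have hcover : G.neighborFinset a ×ˢ G.neighborFinset b ⊆
      light ∪ A ×ˢ G.neighborFinset b ∪ G.neighborFinset a ×ˢ B ∪ (G.neighborFinset a).diag := by
    rintro ⟨x, y⟩ hxy
    have hlight : (x, y) ∈ light ↔ IsLightPath G x a b y := by simp [light]
    obtain ⟨hax, hby⟩ : G.Adj a x ∧ G.Adj b y := by simpa using hxy
    by_contra hbad
    simp only [mem_union, mem_product, mem_filter, mem_diag, SimpleGraph.mem_neighborFinset, A, B,
      hlight, hax, hby, true_and, and_true, not_or, not_lt] at hbad
    obtain ⟨⟨⟨hnot_light, hxb, hx⟩, hya, hy⟩, hxy⟩ := hbad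
    rw [G.commonNeighbors_symm] at hy
    exact hnot_light ⟨hax.symm, hab, hby, hxb, Ne.symm hya, hxy, hx, hy⟩
  have hA : #A ≤ 2 := hG.card_neighbors_eq_or_three_lt_ncard_le_two hab.ne
  have hB : #B ≤ 2 := hG.card_neighbors_eq_or_three_lt_ncard_le_two hab.ne'
  calc G.degree a * G.degree b = #(G.neighborFinset a ×ˢ G.neighborFinset b) := by simp
    _ ≤ #light + #A * G.degree b + G.degree a * #B + G.degree a := by
      grw [hcover, card_union_le, card_union_le, card_union_le]
      simp
    _ ≤ #light + 2 * G.degree b + G.degree a * 2 + G.degree a := by grw [hA, hB]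
    _ ≤ _ := by lia

theorem card_isLightPath_left_le_three (x c y : V) : #{b | IsLightPath G x c b y} ≤ 3 := by
  obtain hempty | ⟨b, hb⟩ := ({b | IsLightPath G x c b y} : Finset V).eq_empty_or_nonempty
  · simp [hempty]
  · calc _ = {b | IsLightPath G x c b y}.ncard := by simp [Set.ncard_eq_toFinset_card']
      _ ≤ (G.commonNeighbors c y).ncard :=
        Set.ncard_le_ncard fun b hb ↦ ⟨hb.adj_middle, hb.adj_right.symm⟩
      _ ≤ 3 := ((mem_filter_univ b).1 hb).ncard_right_le

theorem card_isLightPath_right_le_three (x c y : V) : #{a | IsLightPath G x a c y} ≤ 3 := by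
  simpa only [isLightPath_comm (x := x)] using card_isLightPath_left_le_three y c x

theorem C6Free.card_isLightPath_middle_le_six (hG : C6Free G) (x y : V) :
    #{e : V × V | IsLightPath G x e.1 e.2 y} ≤ 6 := by
  classical
  set s : Finset (V × V) := {e | IsLightPath G x e.1 e.2 y}
  have hs {e} : e ∈ s ↔ IsLightPath G x e.1 e.2 y := by simp [s]
  have hmeet : ∀ e ∈ s, ∀ f ∈ s, e.1 = f.1 ∨ e.1 = f.2 ∨ e.2 = f.1 ∨ e.2 = f.2 := by
    intro e he f hf
    rw [hs] at he hf
    by_contra! hdisjoint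
    refine hG.not_nodup he.adj_left he.adj_middle he.adj_right hf.adj_right.symm
      hf.adj_middle.symm hf.adj_left.symm ?_
    grind [he.adj_left.ne, he.adj_middle.ne, he.adj_right.ne, he.left_ne, he.right_ne, he.ends_ne,
      hf.adj_left.ne, hf.adj_middle.ne, hf.adj_right.ne, hf.left_ne, hf.right_ne]
  obtain hempty | hnonempty := s.eq_empty_or_nonempty
  · simp [hempty]
  obtain ⟨c, hc⟩ | ⟨a, b, c, hsub⟩ :=
    exists_star_or_subset_offDiag hnonempty (fun e he ↦ (hs.1 he).adj_middle.ne) hmeet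
  · have hstar : s ⊆ ({b | IsLightPath G x c b y} : Finset V).image (c, ·) ∪
        ({a | IsLightPath G x a c y} : Finset V).image (·, c) := by
      rintro ⟨a, b⟩ he
      obtain rfl | rfl := hc _ he
      · simp [hs.1 he]
      · simp [hs.1 he]
    grw [hstar, card_union_le, card_image_le, card_image_le, card_isLightPath_left_le_three,
      card_isLightPath_right_le_three]
  · grw [hsub, offDiag_card, ← Nat.mul_sub_one]
    have hcard : #{a, b, c} ≤ 3 := card_le_three
    exact Nat.mul_le_mul hcard (Nat.sub_le_sub_right hcard 1)

theorem C6Free.sum_card_isLightPath_le [DecidableRel G.Adj] (hG : C6Free G) :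
    ∑ d : G.Dart, #{e : V × V | IsLightPath G e.1 d.fst d.snd e.2} ≤ 6 * Fintype.card V ^ 2 :=
  calc ∑ d : G.Dart, #{e : V × V | IsLightPath G e.1 d.fst d.snd e.2}
    _ = ∑ e : V × V, #{d : G.Dart | IsLightPath G e.1 d.fst d.snd e.2} :=
      sum_card_bipartiteAbove_eq_sum_card_bipartiteBelow _
    _ ≤ ∑ e : V × V, #{f : V × V | IsLightPath G e.1 f.1 f.2 e.2} :=
      sum_le_sum fun e _ ↦ card_le_card_of_injOn SimpleGraph.Dart.toProd (fun d ↦ by simp)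
        SimpleGraph.Dart.toProd_injective.injOn
    _ ≤ ∑ _e : V × V, 6 := sum_le_sum fun e _ ↦ hG.card_isLightPath_middle_le_six e.1 e.2
    _ = 6 * Fintype.card V ^ 2 := by
      rw [sum_const, card_univ, Fintype.card_prod, smul_eq_mul]
      ring

theorem sum_dart_fst_eq_sum_degree_nsmul [DecidableRel G.Adj] {M : Type*} [AddCommMonoid M]
    (f : V → M) : ∑ d : G.Dart, f d.fst = ∑ v, G.degree v • f v := by
  classical
  simp_rw [← sum_fiberwise univ (fun d : G.Dart ↦ d.fst) (fun d ↦ f d.fst),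
    ← G.dart_fst_fiber_card_eq_degree]
  exact sum_congr rfl fun v _ ↦ sum_eq_card_nsmul (by simp +contextual)

theorem sum_dart_inv_degree_le [DecidableRel G.Adj] :
    ∑ d : G.Dart, ((G.degree d.fst : ℝ)⁻¹ + (G.degree d.snd : ℝ)⁻¹) ≤ 2 * Fintype.card V := by
  have hfst : ∑ d : G.Dart, (G.degree d.fst : ℝ)⁻¹ ≤ Fintype.card V :=
    calc ∑ d : G.Dart, (G.degree d.fst : ℝ)⁻¹
      _ = ∑ v, G.degree v • (G.degree v : ℝ)⁻¹ :=
        sum_dart_fst_eq_sum_degree_nsmul fun v ↦ (G.degree v : ℝ)⁻¹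
      _ ≤ ∑ _v : V, 1 := sum_le_sum fun v _ ↦ by rw [nsmul_eq_mul]; exact mul_inv_le_one
      _ = Fintype.card V := by simp
  have hsnd : ∑ d : G.Dart, (G.degree d.snd : ℝ)⁻¹ = ∑ d : G.Dart, (G.degree d.fst : ℝ)⁻¹ :=
    Equiv.sum_comp SimpleGraph.Dart.symm_involutive.toPerm fun d ↦ (G.degree d.fst : ℝ)⁻¹
  rw [sum_add_distrib, hsnd]
  linarith

theorem C6Free.three_mul_mul_sub_mul_card_edgeFinset_le [DecidableRel G.Adj] (hG : C6Free G)
    {t : ℝ} (ht : 0 ≤ t) :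
    3 * t * (t - 9) * (2 * #G.edgeFinset) ≤
      6 * (Fintype.card V : ℝ) ^ 2 + t ^ 3 * (2 * Fintype.card V) := by
  have hdart (d : G.Dart) : 3 * t * (t - 9) ≤
      (#{e : V × V | IsLightPath G e.1 d.fst d.snd e.2} : ℝ) +
        t ^ 3 * ((G.degree d.fst : ℝ)⁻¹ + (G.degree d.snd : ℝ)⁻¹) := by
    have hfst : 0 < (G.degree d.fst : ℝ) :=
      mod_cast (G.degree_pos_iff_exists_adj _).2 ⟨_, d.adj⟩
    have hsnd : 0 < (G.degree d.snd : ℝ) :=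
      mod_cast (G.degree_pos_iff_exists_adj _).2 ⟨_, d.adj.symm⟩
    have hlight : (G.degree d.fst * G.degree d.snd : ℝ) ≤
        #{e : V × V | IsLightPath G e.1 d.fst d.snd e.2} + 3 * G.degree d.fst +
          3 * G.degree d.snd := mod_cast hG.degree_mul_degree_le d.adj
    have hbound := three_mul_mul_sub_le_add_cube_mul (by positivity) zero_le_three
      hfst hsnd ht hlight
    linarith
  calc 3 * t * (t - 9) * (2 * #G.edgeFinset) = ∑ _d : G.Dart, 3 * t * (t - 9) := by
        rw [sum_const, card_univ, G.dart_card_eq_twice_card_edges, nsmul_eq_mul]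
        push_cast
        ring
    _ ≤ ∑ d : G.Dart, ((#{e : V × V | IsLightPath G e.1 d.fst d.snd e.2} : ℝ) +
        t ^ 3 * ((G.degree d.fst : ℝ)⁻¹ + (G.degree d.snd : ℝ)⁻¹)) :=
      sum_le_sum fun d _ ↦ hdart d
    _ = (∑ d : G.Dart, #{e : V × V | IsLightPath G e.1 d.fst d.snd e.2} : ℕ) +
        t ^ 3 * ∑ d : G.Dart, ((G.degree d.fst : ℝ)⁻¹ + (G.degree d.snd : ℝ)⁻¹) := by
      rw [sum_add_distrib, ← mul_sum, Nat.cast_sum]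
    _ ≤ 6 * (Fintype.card V : ℝ) ^ 2 + t ^ 3 * (2 * Fintype.card V) := by
      gcongr
      · exact_mod_cast hG.sum_card_isLightPath_le
      · exact sum_dart_inv_degree_le

end Counting

/-- The average degree of a finite graph, with value `0` when there are no vertices. -/
noncomputable def averageDegree (G : SimpleGraph V) : ℝ :=
  2 * G.edgeSet.ncard / Nat.card V

theorem C6Free.averageDegree_sq_mul_sub_le [Finite V] (hG : C6Free G) :
    averageDegree G ^ 2 * (averageDegree G - 27) ≤ 6 * Nat.card V := by
  classical
  have := Fintype.ofFinite V
  cases isEmpty_or_nonempty V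
  · simp [averageDegree]
  have hcard : 0 < (Nat.card V : ℝ) := mod_cast Nat.card_pos
  have hedges : (2 * #G.edgeFinset : ℝ) = averageDegree G * Nat.card V := by
    rw [averageDegree, div_mul_cancel₀ _ hcard.ne', ← G.coe_edgeFinset, Set.ncard_coe_finset]
  have hnonneg : 0 ≤ averageDegree G := by rw [averageDegree]; positivity
  have hcount := hG.three_mul_mul_sub_mul_card_edgeFinset_le hnonneg
  rw [hedges, ← Nat.card_eq_fintype_card] at hcount
  refine le_of_mul_le_mul_right ?_ hcard
  linarith

theorem ex_C6_lt_general [Finite V] (hV : 55 ^ 3 ≤ Nat.card V) (hG : C6Free G) :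
    (G.edgeSet.ncard : ℝ) < (Nat.card V : ℝ) ^ ((4 : ℝ) / 3) := by
  set c : ℝ := (Nat.card V : ℝ) ^ ((1 : ℝ) / 3) with hc
  have hc_cube : c ^ 3 = Nat.card V := by
    rw [hc, ← Real.rpow_mul_natCast (by positivity)]
    norm_num
  have hc_four : c ^ 4 = (Nat.card V : ℝ) ^ ((4 : ℝ) / 3) := by
    rw [hc, ← Real.rpow_mul_natCast (by positivity)]
    norm_num
  have hc_ge : 55 ≤ c := by
    refine le_of_pow_le_pow_left₀ three_ne_zero (by positivity) ?_
    rw [hc_cube]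
    exact_mod_cast hV
  by_contra! hmany
  have hdegree : 2 * c ≤ averageDegree G := by
    rw [averageDegree, ← hc_cube, le_div_iff₀ (by positivity)]
    linarith
  have hupper : averageDegree G ^ 2 * (averageDegree G - 27) ≤ 6 * c ^ 3 := by
    rw [hc_cube]
    exact hG.averageDegree_sq_mul_sub_le
  have hlower : (2 * c) ^ 2 * (2 * c - 27) ≤ averageDegree G ^ 2 * (averageDegree G - 27) := by
    gcongr
    linarith
  have hpos : 0 < c ^ 2 * (c - 54) := mul_pos (by positivity) (by linarith)
  linarith

/-- For all sufficiently large `n`, every `C₆`-free simple graph on `n` vertices has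
fewer than `n^{4/3}` edges. -/
theorem ex_C6_lt : ∃ N : ℕ, ∀ n : ℕ, N ≤ n → ∀ G : SimpleGraph (Fin n), C6Free G →
    (G.edgeSet.ncard : ℝ) < (n : ℝ) ^ ((4 : ℝ) / 3) :=
  ⟨55 ^ 3, fun n hn G hG ↦ by simpa using ex_C6_lt_general (by simpa using hn) hG⟩
end

section
/- Let u and v be positive integers. Every bipartite simple graph whose two vertex classes have sizes u and v and which contains no cycle of length 6 has at most 2^{1/3}(uv)^{2/3} + 16(u + v) edges. -/
/-!
Call a path `a - x - y - b` *good* if `a` and `y`, as well as `b` and `x`, have at most two common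
neighbours. In a `C₆`-free bipartite graph an edge `xy` is the middle of at least
`(d(x) - 2)(d(y) - 2)` good paths, since at most one neighbour of `x` other than `y` has more than
two common neighbours with `y`. Conversely, fix `a` and `b`. Two good paths from `a` to `b` with
disjoint middle edges would form a hexagon, so these middle edges pairwise intersect and therefore
all share a vertex, and then goodness leaves at most two of them. Hence
`∑ (d(x) - 2)(d(y) - 2) ≤ 2uv` over all edges `xy`. Since `∑ 1 / d(x) ≤ u` and `∑ 1 / d(y) ≤ v`,
Hölder's inequality bounds `∑ (1 - 2 / d(x) - 2 / d(y))` by `(2uv · u · v)^{1/3}`, while this sum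
falls short of the number of edges by at most `2(u + v)`.
-/

open Finset

theorem sum_pow_three_le_sum_mul_sum_mul_sum_of_pow_three_le_mul {ι : Type*} (s : Finset ι)
    {r f g h : ι → ℝ} (hf : ∀ i ∈ s, 0 ≤ f i) (hg : ∀ i ∈ s, 0 ≤ g i) (hh : ∀ i ∈ s, 0 ≤ h i)
    (hr : ∀ i ∈ s, r i ^ 3 ≤ f i * g i * h i) :
    (∑ i ∈ s, r i) ^ 3 ≤ (∑ i ∈ s, f i) * (∑ i ∈ s, g i) * ∑ i ∈ s, h i := by
  have hgh : ∀ i ∈ s, 0 ≤ g i * h i := fun i hi ↦ mul_nonneg (hg i hi) (hh i hi)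
  have hF : 0 ≤ ∑ i ∈ s, f i := sum_nonneg hf
  have hS : 0 ≤ ∑ i ∈ s, √(g i * h i) := sum_nonneg fun i _ ↦ Real.sqrt_nonneg _
  have cube_rpow {x : ℝ} (hx : 0 ≤ x) : (x ^ (1 / 3 : ℝ)) ^ 3 = x := by
    rw [← Real.rpow_mul_natCast hx]; norm_num
  have le_roots : ∀ i ∈ s, r i ≤ f i ^ (1 / 3 : ℝ) * (g i * h i) ^ (1 / 3 : ℝ) := fun i hi ↦ by
    refine le_of_pow_le_pow_left₀ three_ne_zero
      (mul_nonneg (Real.rpow_nonneg (hf i hi) _) (Real.rpow_nonneg (hgh i hi) _)) ?_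
    rw [mul_pow, cube_rpow (hf i hi), cube_rpow (hgh i hi), ← mul_assoc]
    exact hr i hi
  have holder : ∑ i ∈ s, r i ≤
      (∑ i ∈ s, f i) ^ (1 / 3 : ℝ) * (∑ i ∈ s, √(g i * h i)) ^ (1 / (3 / 2) : ℝ) := by
    refine (sum_le_sum le_roots).trans ((Real.inner_le_Lp_mul_Lq_of_nonneg s (p := 3) (q := 3 / 2)
      (Real.holderConjugate_iff.2 (by norm_num)) (fun i hi ↦ Real.rpow_nonneg (hf i hi) _)
      (fun i hi ↦ Real.rpow_nonneg (hgh i hi) _)).trans_eq ?_)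
    congr 2 <;> refine sum_congr rfl fun i hi ↦ ?_
    · rw [← Real.rpow_mul (hf i hi)]; norm_num
    · rw [← Real.rpow_mul (hgh i hi), Real.sqrt_eq_rpow]; norm_num
  calc (∑ i ∈ s, r i) ^ 3
      ≤ (∑ i ∈ s, f i) * (∑ i ∈ s, √(g i * h i)) ^ 2 := by
        refine ((Odd.pow_le_pow (by decide)).2 holder).trans_eq ?_
        rw [mul_pow, cube_rpow hF, ← Real.rpow_mul_natCast hS]
        norm_num
    _ ≤ (∑ i ∈ s, f i) * ((∑ i ∈ s, g i) * ∑ i ∈ s, h i) := by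
        gcongr
        exact sum_sq_le_sum_mul_sum_of_sq_le_mul s hg hh fun i hi ↦ (Real.sq_sqrt (hgh i hi)).le
    _ = _ := (mul_assoc ..).symm

theorem one_sub_two_inv_sub_two_inv_pow_three_le {p q : ℕ} (hp : 0 < p) (hq : 0 < q) :
    (1 - 2 * (p : ℝ)⁻¹ - 2 * (q : ℝ)⁻¹) ^ 3 ≤
      (((p - 2) * (q - 2) : ℕ) : ℝ) * (p : ℝ)⁻¹ * (q : ℝ)⁻¹ := by
  have hp' : (0 : ℝ) < (p : ℝ)⁻¹ := by positivity
  have hq' : (0 : ℝ) < (q : ℝ)⁻¹ := by positivity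
  rcases le_total (1 - 2 * (p : ℝ)⁻¹ - 2 * (q : ℝ)⁻¹) 0 with hneg | hpos
  · exact (Odd.pow_nonpos (by decide) hneg).trans (by positivity)
  have two_le {n : ℕ} (hn : 0 < n) (h : 2 * (n : ℝ)⁻¹ ≤ 1) : 2 ≤ n := by
    have : (2 : ℝ) ≤ n := by rwa [← div_eq_mul_inv, div_le_one (by positivity)] at h
    exact_mod_cast this
  have hp2 : 2 ≤ p := two_le hp (by linarith)
  have hq2 : 2 ≤ q := two_le hq (by linarith)
  calc (1 - 2 * (p : ℝ)⁻¹ - 2 * (q : ℝ)⁻¹) ^ 3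
      ≤ 1 - 2 * (p : ℝ)⁻¹ - 2 * (q : ℝ)⁻¹ := pow_le_of_le_one hpos (by linarith) three_ne_zero
    _ ≤ (1 - 2 * (p : ℝ)⁻¹) * (1 - 2 * (q : ℝ)⁻¹) := by linarith [mul_pos hp' hq']
    _ = _ := by push_cast [hp2, hq2]; field_simp

theorem forall_fst_eq_or_forall_snd_eq {α β : Type*} {S : Set (α × β)}
    (hS : ∀ e ∈ S, ∀ e' ∈ S, e.1 = e'.1 ∨ e.2 = e'.2) :
    (∀ e ∈ S, ∀ e' ∈ S, e.1 = e'.1) ∨ ∀ e ∈ S, ∀ e' ∈ S, e.2 = e'.2 := by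
  by_contra! h
  grind

section Hexagon

variable {V : Type*} {G : SimpleGraph V}

theorem ne_of_adj_of_adj_of_adj (hG : G.CliqueFree 3) {a b c d : V} (hab : G.Adj a b)
    (hbc : G.Adj b c) (hcd : G.Adj c d) : a ≠ d := by
  classical
  rintro rfl
  exact hG {a, b, c} (SimpleGraph.is3Clique_triple_iff.2 ⟨hab, hcd.symm, hbc⟩)

theorem C6Free.not_nodup_s8 (hC6 : C6Free G) {x₁ x₂ x₃ x₄ x₅ x₆ : V} (h₁₂ : G.Adj x₁ x₂)
    (h₂₃ : G.Adj x₂ x₃) (h₃₄ : G.Adj x₃ x₄) (h₄₅ : G.Adj x₄ x₅) (h₅₆ : G.Adj x₅ x₆)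
    (h₆₁ : G.Adj x₆ x₁) : ¬ [x₂, x₃, x₄, x₅, x₆, x₁].Nodup := by
  intro hnodup
  let w : G.Walk x₁ x₁ := .cons h₁₂ <| .cons h₂₃ <| .cons h₃₄ <| .cons h₄₅ <| .cons h₅₆ <|
    .cons h₆₁ .nil
  refine hC6 x₁ w (SimpleGraph.Walk.isCycle_iff_isPath_tail_and_le_length.2 ⟨?_, ?_⟩) rfl
  · simpa [SimpleGraph.Walk.isPath_def, w] using hnodup
  · simp [w]

theorem C6Free.false_of_alternating_hexagon (hC6 : C6Free G) (hG : G.CliqueFree 3)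
    {x₁ x₂ x₃ y₁ y₂ y₃ : V}
    (hx₁y₁ : G.Adj x₁ y₁) (hy₁x₂ : G.Adj y₁ x₂) (hx₂y₂ : G.Adj x₂ y₂) (hy₂x₃ : G.Adj y₂ x₃)
    (hx₃y₃ : G.Adj x₃ y₃) (hy₃x₁ : G.Adj y₃ x₁) (hx : [x₁, x₂, x₃].Nodup)
    (hy : [y₁, y₂, y₃].Nodup) : False := by
  have h₁ : x₁ ≠ y₂ := ne_of_adj_of_adj_of_adj hG hx₁y₁ hy₁x₂ hx₂y₂
  have h₂ : x₂ ≠ y₃ := ne_of_adj_of_adj_of_adj hG hx₂y₂ hy₂x₃ hx₃y₃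
  have h₃ : x₃ ≠ y₁ := ne_of_adj_of_adj_of_adj hG hx₃y₃ hy₃x₁ hx₁y₁
  refine hC6.not_nodup_s8 hx₁y₁ hy₁x₂ hx₂y₂ hy₂x₃ hx₃y₃ hy₃x₁ ?_
  simp only [List.nodup_cons, List.mem_cons] at hx hy ⊢
  grind [SimpleGraph.Adj.ne]

variable [Fintype V] [DecidableEq V] [DecidableRel G.Adj]

variable (G) in
/-- The neighbours `a ≠ y` of `x` having at most two common neighbours with `y`. If `x` and `y` are
adjacent, these are the admissible first vertices of a good path with middle edge `xy`. -/
def thinNeighbors (x y : V) : Finset V :=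
  {a ∈ (G.neighborFinset x).erase y | #(G.neighborFinset a ∩ G.neighborFinset y) ≤ 2}

theorem mem_thinNeighbors {x y a : V} : a ∈ thinNeighbors G x y ↔
    a ≠ y ∧ G.Adj x a ∧ #(G.neighborFinset a ∩ G.neighborFinset y) ≤ 2 := by
  simp [thinNeighbors, and_assoc]

theorem C6Free.eq_of_two_lt_card_inter (hC6 : C6Free G) (hG : G.CliqueFree 3) {x y a b : V}
    (hxa : G.Adj x a) (hxb : G.Adj x b) (hay : a ≠ y) (hby : b ≠ y)
    (ha : 2 < #(G.neighborFinset a ∩ G.neighborFinset y))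
    (hb : 2 < #(G.neighborFinset b ∩ G.neighborFinset y)) : a = b := by
  by_contra hab
  obtain ⟨z, hz, hzx⟩ := exists_mem_ne (one_lt_two.trans ha) x
  obtain ⟨w, hw, hwxz⟩ : ∃ w ∈ G.neighborFinset b ∩ G.neighborFinset y, w ∉ ({x, z} : Finset V) :=
    exists_mem_notMem_of_card_lt_card (card_le_two.trans_lt hb)
  simp only [mem_inter, SimpleGraph.mem_neighborFinset, mem_insert, mem_singleton, not_or]
    at hz hw hwxz
  exact hC6.false_of_alternating_hexagon hG hz.1 hz.2.symm hw.2 hw.1.symm hxb.symm hxa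
    (by simp [hay, hab, Ne.symm hby]) (by simp [hzx, hwxz.1, Ne.symm hwxz.2])

theorem C6Free.degree_sub_two_le_card_thinNeighbors (hC6 : C6Free G) (hG : G.CliqueFree 3)
    (x y : V) : G.degree x - 2 ≤ #(thinNeighbors G x y) := by
  have card_thick_le_one : #{a ∈ (G.neighborFinset x).erase y |
      ¬ #(G.neighborFinset a ∩ G.neighborFinset y) ≤ 2} ≤ 1 := by
    refine card_le_one.2 fun a ha b hb ↦ ?_
    simp only [mem_filter, mem_erase, SimpleGraph.mem_neighborFinset, not_le] at ha hb
    exact hC6.eq_of_two_lt_card_inter hG ha.1.2 hb.1.2 ha.1.1 hb.1.1 ha.2 hb.2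
  have card_split := card_filter_add_card_filter_not (s := (G.neighborFinset x).erase y)
    (fun a ↦ #(G.neighborFinset a ∩ G.neighborFinset y) ≤ 2)
  have card_erase := pred_card_le_card_erase (s := G.neighborFinset x) (a := y)
  rw [G.card_neighborFinset_eq_degree] at card_erase
  rw [thinNeighbors]
  omega

theorem C6Free.card_middle_edges_le_two (hC6 : C6Free G) (hG : G.CliqueFree 3) {a b : V}
    {S : Finset (V × V)} (hadj : ∀ e ∈ S, G.Adj e.1 e.2)
    (ha : ∀ e ∈ S, a ∈ thinNeighbors G e.1 e.2) (hb : ∀ e ∈ S, b ∈ thinNeighbors G e.2 e.1) :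
    #S ≤ 2 := by
  simp only [mem_thinNeighbors] at ha hb
  have intersecting : ∀ e ∈ S, ∀ e' ∈ S, e.1 = e'.1 ∨ e.2 = e'.2 := fun e he e' he' ↦ by
    by_contra! hne
    obtain ⟨hay, hxa, -⟩ := ha e he
    obtain ⟨hay', hxa', -⟩ := ha e' he'
    obtain ⟨hbx, hyb, -⟩ := hb e he
    obtain ⟨hbx', hyb', -⟩ := hb e' he'
    exact hC6.false_of_alternating_hexagon hG hxa.symm (hadj e he) hyb hyb'.symm
      (hadj e' he').symm hxa' (by simp [hay, hay', hne.2]) (by simp [hbx', hne.1, Ne.symm hbx])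
  rcases S.eq_empty_or_nonempty with rfl | ⟨e₀, he₀⟩
  · simp
  rcases forall_fst_eq_or_forall_snd_eq (S := (S : Set (V × V))) intersecting with hfst | hsnd
  · refine (card_le_card_of_injOn Prod.snd (fun e he ↦ ?_) fun e he e' he' h ↦
      Prod.ext (hfst e he e' he') h).trans (hb e₀ he₀).2.2
    simpa [hfst e₀ he₀ e he] using ⟨(hb e he).2.1.symm, hadj e he⟩
  · refine (card_le_card_of_injOn Prod.fst (fun e he ↦ ?_) fun e he e' he' h ↦
      Prod.ext h (hsnd e he e' he')).trans (ha e₀ he₀).2.2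
    simpa [hsnd e₀ he₀ e he] using ⟨(ha e he).2.1.symm, (hadj e he).symm⟩

end Hexagon

section DoubleCounting

variable {V : Type*} [Fintype V] {G : SimpleGraph V} [DecidableRel G.Adj]

theorem C6Free.sum_interedges_degree_sub_two_mul_le (hC6 : C6Free G) {s t : Finset V}
    (hst : G.IsBipartiteWith s t) :
    ∑ e ∈ G.interedges s t, (G.degree e.1 - 2) * (G.degree e.2 - 2) ≤ 2 * (#s * #t) := by
  classical
  have hG : G.CliqueFree 3 := hst.isBipartite.cliqueFree (by norm_num)
  let IsGood (e q : V × V) : Prop := q.1 ∈ thinNeighbors G e.1 e.2 ∧ q.2 ∈ thinNeighbors G e.2 e.1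
  calc ∑ e ∈ G.interedges s t, (G.degree e.1 - 2) * (G.degree e.2 - 2)
      ≤ ∑ e ∈ G.interedges s t, #(bipartiteAbove IsGood (t ×ˢ s) e) := by
        refine sum_le_sum fun e he ↦ ?_
        obtain ⟨hs, ht, -⟩ := G.mem_interedges_iff.1 he
        refine (Nat.mul_le_mul (hC6.degree_sub_two_le_card_thinNeighbors hG e.1 e.2)
          (hC6.degree_sub_two_le_card_thinNeighbors hG e.2 e.1)).trans ?_
        rw [← card_product]
        refine card_le_card fun q hq ↦ ?_
        obtain ⟨ha, hb⟩ := mem_product.1 hq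
        exact mem_filter.2 ⟨mem_product.2
          ⟨hst.mem_of_mem_adj hs (mem_thinNeighbors.1 ha).2.1,
            hst.symm.mem_of_mem_adj ht (mem_thinNeighbors.1 hb).2.1⟩, ha, hb⟩
    _ = ∑ q ∈ t ×ˢ s, #(bipartiteBelow IsGood (G.interedges s t) q) :=
        sum_card_bipartiteAbove_eq_sum_card_bipartiteBelow IsGood
    _ ≤ #(t ×ˢ s) • 2 := by
        refine sum_le_card_nsmul _ _ _ fun q _ ↦ hC6.card_middle_edges_le_two hG (a := q.1)
          (b := q.2) (fun e he ↦ ?_) (fun e he ↦ ?_) fun e he ↦ ?_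
        all_goals obtain ⟨he, ha, hb⟩ := mem_filter.1 he
        exacts [(G.mem_interedges_iff.1 he).2.2, ha, hb]
    _ = 2 * (#s * #t) := by rw [card_product, smul_eq_mul]; ring

variable (G) in
theorem sum_interedges_inv_degree_fst_le (s t : Finset V) :
    ∑ e ∈ G.interedges s t, (G.degree e.1 : ℝ)⁻¹ ≤ #s := by
  rw [SimpleGraph.interedges_def, sum_filter, sum_product]
  refine (sum_le_card_nsmul s _ 1 fun x _ ↦ ?_).trans_eq (by simp)
  change ∑ y ∈ t, (if G.Adj x y then (G.degree x : ℝ)⁻¹ else 0) ≤ 1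
  rw [← sum_filter, sum_const, nsmul_eq_mul, ← div_eq_mul_inv]
  refine div_le_one_of_le₀ (Nat.cast_le.2 (card_le_card fun y hy ↦ ?_)) (Nat.cast_nonneg _)
  simpa using (mem_filter.1 hy).2

variable (G) in
theorem sum_interedges_inv_degree_snd_le (s t : Finset V) :
    ∑ e ∈ G.interedges s t, (G.degree e.2 : ℝ)⁻¹ ≤ #t := by
  refine le_of_eq_of_le ?_ (sum_interedges_inv_degree_fst_le G t s)
  exact sum_nbij' Prod.swap Prod.swap (fun _ ↦ G.swap_mem_interedges_iff.2)
    (fun _ ↦ G.swap_mem_interedges_iff.2) (fun _ _ ↦ rfl) (fun _ _ ↦ rfl) (fun _ _ ↦ rfl)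

theorem card_interedges_eq_card_edgeFinset {s t : Finset V} (hst : G.IsBipartiteWith s t) :
    #(G.interedges s t) = #G.edgeFinset := by
  rw [← SimpleGraph.isBipartiteWith_sum_degrees_eq_card_edges hst, SimpleGraph.interedges_def,
    card_filter, sum_product]
  refine sum_congr rfl fun x hx ↦ ?_
  rw [← card_filter, ← G.card_neighborFinset_eq_degree,
    SimpleGraph.isBipartiteWith_neighborFinset hst hx]

theorem C6Free.sum_interedges_one_sub_two_inv_degree_pow_three_le (hC6 : C6Free G)
    {s t : Finset V} (hst : G.IsBipartiteWith s t) :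
    (∑ e ∈ G.interedges s t, (1 - 2 * (G.degree e.1 : ℝ)⁻¹ - 2 * (G.degree e.2 : ℝ)⁻¹)) ^ 3 ≤
      2 * (#s * #t : ℝ) ^ 2 := by
  have paths : ∑ e ∈ G.interedges s t, (((G.degree e.1 - 2) * (G.degree e.2 - 2) : ℕ) : ℝ) ≤
      2 * (#s * #t) := by exact_mod_cast hC6.sum_interedges_degree_sub_two_mul_le hst
  calc _ ≤ (∑ e ∈ G.interedges s t, (((G.degree e.1 - 2) * (G.degree e.2 - 2) : ℕ) : ℝ)) *
        (∑ e ∈ G.interedges s t, (G.degree e.1 : ℝ)⁻¹) *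
        ∑ e ∈ G.interedges s t, (G.degree e.2 : ℝ)⁻¹ := by
        refine sum_pow_three_le_sum_mul_sum_mul_sum_of_pow_three_le_mul _ (fun _ _ ↦ by positivity)
          (fun _ _ ↦ by positivity) (fun _ _ ↦ by positivity) fun e he ↦ ?_
        have hadj : G.Adj e.1 e.2 := (G.mem_interedges_iff.1 he).2.2
        exact one_sub_two_inv_sub_two_inv_pow_three_le hadj.degree_pos_left hadj.degree_pos_right
    _ ≤ 2 * (#s * #t) * #s * #t := by
        gcongr
        exacts [sum_interedges_inv_degree_fst_le G s t, sum_interedges_inv_degree_snd_le G s t]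
    _ = 2 * (#s * #t : ℝ) ^ 2 := by ring

end DoubleCounting

theorem isBipartiteWith_map_inl_map_inr {α β : Type*} [Fintype α] [Fintype β]
    {G : SimpleGraph (α ⊕ β)} (hl : ∀ a b : α, ¬ G.Adj (Sum.inl a) (Sum.inl b))
    (hr : ∀ a b : β, ¬ G.Adj (Sum.inr a) (Sum.inr b)) :
    G.IsBipartiteWith ↑((univ : Finset α).map (.inl : α ↪ α ⊕ β))
      ↑((univ : Finset β).map (.inr : β ↪ α ⊕ β)) where
  disjoint := by simpa using Set.isCompl_range_inl_range_inr.disjoint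
  mem_of_adj v w hvw := by
    rcases v with a | b <;> rcases w with c | d <;> simp_all

theorem ex_C6_bipartite_le_general {V : Type*} [Finite V] {G : SimpleGraph V} {s t : Finset V}
    (hst : G.IsBipartiteWith s t) (hC6 : C6Free G) :
    (G.edgeSet.ncard : ℝ) ≤
      (2 : ℝ) ^ ((1 : ℝ) / 3) * ((#s : ℝ) * (#t : ℝ)) ^ ((2 : ℝ) / 3) +
        2 * ((#s : ℝ) + (#t : ℝ)) := by
  classical
  have := Fintype.ofFinite V
  have card_edges : G.edgeSet.ncard = #(G.interedges s t) := by
    rw [card_interedges_eq_card_edgeFinset hst, ← SimpleGraph.coe_edgeFinset, Set.ncard_coe_finset]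
  have sum_le : ∑ e ∈ G.interedges s t,
        (1 - 2 * (G.degree e.1 : ℝ)⁻¹ - 2 * (G.degree e.2 : ℝ)⁻¹) ≤
      (2 : ℝ) ^ ((1 : ℝ) / 3) * ((#s : ℝ) * (#t : ℝ)) ^ ((2 : ℝ) / 3) := by
    refine le_of_pow_le_pow_left₀ three_ne_zero (by positivity)
      ((hC6.sum_interedges_one_sub_two_inv_degree_pow_three_le hst).trans_eq ?_)
    rw [mul_pow (2 ^ _ : ℝ), ← Real.rpow_mul_natCast two_pos.le,
      ← Real.rpow_mul_natCast (by positivity)]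
    norm_num
  simp only [sum_sub_distrib, ← mul_sum, sum_const, nsmul_eq_mul, mul_one] at sum_le
  rw [card_edges]
  linarith [sum_interedges_inv_degree_fst_le G s t, sum_interedges_inv_degree_snd_le G s t]

/-- Every `C₆`-free bipartite simple graph with vertex classes of sizes `u` and `v` has at
most `2^{1/3}(uv)^{2/3} + 16(u + v)` edges. -/
theorem ex_C6_bipartite_le (u v : ℕ) (hu : 0 < u) (hv : 0 < v)
    (G : SimpleGraph (Fin u ⊕ Fin v))
    (hbipL : ∀ a b : Fin u, ¬ G.Adj (Sum.inl a) (Sum.inl b))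
    (hbipR : ∀ a b : Fin v, ¬ G.Adj (Sum.inr a) (Sum.inr b))
    (hC6 : C6Free G) :
    (G.edgeSet.ncard : ℝ) ≤
      (2 : ℝ) ^ ((1 : ℝ) / 3) * ((u : ℝ) * (v : ℝ)) ^ ((2 : ℝ) / 3) +
        16 * ((u : ℝ) + (v : ℝ)) := by
  have h := ex_C6_bipartite_le_general (isBipartiteWith_map_inl_map_inr hbipL hbipR) hC6
  simp only [card_map, card_univ, Fintype.card_fin] at h
  linarith [(u.cast_nonneg : (0 : ℝ) ≤ u), (v.cast_nonneg : (0 : ℝ) ≤ v)]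
end
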